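/- (Baker) If α₁, …, α_n are non-zero algebraic numbers such that log α₁, …, log α_n are linearly independent over the rational numbers, then 1, log α₁, …, log α_n are linearly independent over the field of algebraic numbers. -/

import Mathlib

/-! Let `∑ i, β i * log (α i) = b₀` with the `β i` and `b₀` integers of a Galois number field `K`
containing the `α i`. For `σ` in `G = Gal(K/ℚ)` put `u σ = ∑ i, σ (β i) * log (α i)`. The numbers
`exp (∑ σ, σ x * u σ) = ∏ i, α i ^ Tr (β i * x)`, for `x` in `𝓞 K`, are in `K`, and so is
`u 1 = b₀`. If all the `u σ` vanish, then so do all the traces `Tr (β i * x)`, since the logarithms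
are independent over `ℚ`, and hence all the `β i`.

Otherwise embed `𝓞 K` in the space of functions `G → ℂ` by sending `x` to the vector with
coordinates `x` at `1` and `σ x * u σ` at `σ ≠ 1`, and consider the functions
`∑ a y, ξ a y * z 1 ^ a * exp (b₀ * y * z 1 + ∑ σ ≠ 1, σ y * z σ)` of `z`. Their partial derivatives
at lattice points are in `K`. By Siegel's lemma, such a function with small integral coefficients
`ξ`, not all zero, vanishes to a high order on a box of lattice points. It is not identically zero,
so let `n` be the least order of a derivative which does not vanish at some point of the box.
Schwarz' lemma on the lines through the points of the box makes that derivative so small that, by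
the product formula, it must vanish after all.
-/

open Polynomial NumberField
open scoped Matrix
open Complex (exp)
open Module (Basis Free finrank)

universe u

section TwistedDerivative

variable {R S : Type*} [CommSemiring R] [CommSemiring S]

/-- The operator `∏ (v • d/dX + w)`, the product being over the pairs `(v, w)` in `s`. It describes
how iterated directional derivatives act on `P(lin z) * exp (freq z)`: each direction `x`
contributes the pair `(lin x, freq x)`. -/
noncomputable def twistedDeriv (s : Multiset (R × R)) : R[X] →ₗ[R] R[X] :=
  aeval derivative (s.map fun p => C p.1 * X + C p.2).prod

@[simp]
lemma twistedDeriv_zero (P : R[X]) : twistedDeriv 0 P = P := by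
  simp [twistedDeriv]

lemma twistedDeriv_cons (p : R × R) (s : Multiset (R × R)) (P : R[X]) :
    twistedDeriv (p ::ₘ s) P =
      p.1 • derivative (twistedDeriv s P) + p.2 • twistedDeriv s P := by
  simp [twistedDeriv, Module.End.mul_apply, ← smul_eq_C_mul, Algebra.algebraMap_eq_smul_one]

lemma twistedDeriv_cons' (p : R × R) (s : Multiset (R × R)) (P : R[X]) :
    twistedDeriv (p ::ₘ s) P = twistedDeriv s (p.1 • derivative P + p.2 • P) := by
  rw [twistedDeriv, Multiset.map_cons, Multiset.prod_cons, mul_comm]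
  simp [twistedDeriv, Module.End.mul_apply, ← smul_eq_C_mul, Algebra.algebraMap_eq_smul_one]

lemma twistedDeriv_cons_X_pow (p : R × R) (s : Multiset (R × R)) (a : ℕ) :
    twistedDeriv (p ::ₘ s) (X ^ a) =
      (p.1 * a) • twistedDeriv s (X ^ (a - 1)) + p.2 • twistedDeriv s (X ^ a) := by
  rw [twistedDeriv_cons', map_add, map_smul, map_smul, derivative_X_pow, ← smul_eq_C_mul,
    map_smul, smul_smul]

lemma map_twistedDeriv (f : R →+* S) (s : Multiset (R × R)) (P : R[X]) :
    (twistedDeriv s P).map f = twistedDeriv (s.map (Prod.map f f)) (P.map f) := by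
  induction s using Multiset.induction_on with
  | empty => simp
  | cons p s ih => simp [twistedDeriv_cons, Polynomial.map_smul, ← ih, derivative_map]

lemma map_eval_twistedDeriv_X_pow (f : R →+* S) (s : Multiset (R × R)) (a : ℕ) (x : R) :
    f (eval x (twistedDeriv s (X ^ a))) =
      eval (f x) (twistedDeriv (s.map (Prod.map f f)) (X ^ a)) := by
  rw [← eval_map_apply, map_twistedDeriv, Polynomial.map_pow, map_X]

lemma twistedDeriv_replicate (n : ℕ) (v w : R) :
    twistedDeriv (Multiset.replicate n (v, w)) = aeval derivative ((C v * X + C w) ^ n) := by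
  simp [twistedDeriv]

lemma aeval_derivative_comp (Q P : R[X]) (v w : R) :
    aeval derivative (Q.comp (C v * X + C w)) P =
      Q.sum fun n c => c • twistedDeriv (Multiset.replicate n (v, w)) P := by
  simp only [twistedDeriv_replicate, comp_eq_sum_left, Polynomial.sum, map_sum, map_mul, aeval_C,
    LinearMap.sum_apply, Module.End.mul_apply, Module.algebraMap_end_apply]

lemma aeval_derivative_eq_zero {Q P : R[X]} {n : ℕ} (hP : P.natDegree < n) (hQ : X ^ n ∣ Q) :
    aeval derivative Q P = 0 := by
  obtain ⟨S, rfl⟩ := hQ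
  rw [mul_comm, map_mul, map_pow, aeval_X, Module.End.mul_apply, Module.End.pow_apply,
    iterate_derivative_eq_zero hP, map_zero]

lemma aeval_derivative_C (Q : R[X]) (c : R) : aeval derivative Q (C c) = C (Q.coeff 0 * c) := by
  nth_rewrite 1 [← divX_mul_X_add Q]
  simp [Module.End.mul_apply, Algebra.algebraMap_eq_smul_one, smul_eq_C_mul]

lemma aeval_derivative_X_pow_natDegree_mul (Q P : R[X]) :
    aeval derivative (X ^ P.natDegree * Q) P =
      C (Q.coeff 0 * (P.natDegree.factorial * P.leadingCoeff)) := by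
  have hconst : derivative^[P.natDegree] P = C (P.natDegree.factorial * P.leadingCoeff) := by
    rw [eq_C_of_natDegree_le_zero ((natDegree_iterate_derivative _ _).trans (by simp)),
      coeff_iterate_derivative]
    simp [Nat.descFactorial_self]
  rw [mul_comm, map_mul, map_pow, aeval_X, Module.End.mul_apply, Module.End.pow_apply, hconst,
    aeval_derivative_C]

end TwistedDerivative

lemma norm_eval_twistedDeriv_X_pow_le {R : Type*} [NormedCommRing R] [NormOneClass R]
    {s : Multiset (R × R)} {a : ℕ} {B Z : ℝ} (hZ : 1 ≤ Z)
    (hs : ∀ p ∈ s, ‖p.1‖ * a + ‖p.2‖ ≤ B) {x : R} (hx : ‖x‖ ≤ Z) :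
    ‖eval x (twistedDeriv s (X ^ a))‖ ≤ B ^ Multiset.card s * Z ^ a := by
  induction s using Multiset.induction_on generalizing a with
  | empty =>
    simpa using (norm_pow_le x a).trans (pow_le_pow_left₀ (norm_nonneg x) hx a)
  | cons p s ih =>
    have hp := hs p (Multiset.mem_cons_self p s)
    have hB : 0 ≤ B := le_trans (by positivity) hp
    have hs' : ∀ q ∈ s, ‖q.1‖ * a + ‖q.2‖ ≤ B := fun q hq => hs q (Multiset.mem_cons_of_mem hq)
    have hlow : ‖eval x (twistedDeriv s (X ^ (a - 1)))‖ ≤ B ^ Multiset.card s * Z ^ a := by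
      refine (ih fun q hq => le_trans ?_ (hs' q hq)).trans ?_
      · gcongr; omega
      · gcongr; omega
    have hcast : ‖(a : R)‖ ≤ a := by simpa using Nat.norm_cast_le (α := R) a
    rw [twistedDeriv_cons_X_pow, eval_add, eval_smul, eval_smul, smul_eq_mul, smul_eq_mul,
      Multiset.card_cons]
    calc ‖p.1 * a * eval x (twistedDeriv s (X ^ (a - 1))) + p.2 * eval x (twistedDeriv s (X ^ a))‖
        ≤ ‖p.1‖ * a * (B ^ Multiset.card s * Z ^ a) + ‖p.2‖ * (B ^ Multiset.card s * Z ^ a) := by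
          refine (norm_add_le _ _).trans (add_le_add ?_ ?_)
          · refine (norm_mul_le _ _).trans (mul_le_mul ?_ hlow (norm_nonneg _) (by positivity))
            exact (norm_mul_le _ _).trans (by gcongr)
          · exact (norm_mul_le _ _).trans (by gcongr; exact ih hs')
      _ = (‖p.1‖ * a + ‖p.2‖) * (B ^ Multiset.card s * Z ^ a) := by ring
      _ ≤ B * (B ^ Multiset.card s * Z ^ a) := by gcongr
      _ = B ^ (Multiset.card s + 1) * Z ^ a := by ring

/-- The exponential polynomial `z ↦ ∑ y, coeff y (lin z) * exp (freq y z)` on a complex vector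
space: its polynomial coefficients depend on `z` through the single linear form `lin` only. -/
structure ExpPoly (V Y : Type*) [AddCommGroup V] [Module ℂ V] where
  lin : V →ₗ[ℂ] ℂ
  coeff : Y → ℂ[X]
  freq : Y → V →ₗ[ℂ] ℂ

namespace ExpPoly

variable {V Y : Type*} [AddCommGroup V] [Module ℂ V] (F : ExpPoly V Y)

lemma exists_lin_ne_zero_and_freq_injective [Finite Y] (hlin : F.lin ≠ 0)
    (hfreq : Function.Injective F.freq) :
    ∃ v, F.lin v ≠ 0 ∧ Function.Injective fun y => F.freq y v := by
  obtain ⟨v, hv⟩ := Module.Dual.exists_forall_ne_zero_of_forall_exists (K := ℂ) (M := V)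
    (fun o : Option {q : Y × Y // q.1 ≠ q.2} =>
      o.elim F.lin fun q => F.freq q.1.1 - F.freq q.1.2) (by
      rintro (_ | ⟨q, hq⟩)
      · exact DFunLike.ne_iff.1 hlin
      · exact DFunLike.ne_iff.1 (sub_ne_zero.2 (hfreq.ne hq)))
  exact ⟨v, hv none, fun y y' h => by_contra fun hy => hv (some ⟨(y, y'), hy⟩) (sub_eq_zero.2 h)⟩

variable [Fintype Y]

/-- The iterated directional derivative at `z` of the function defined by `F`, along all the
vectors of the multiset `s`; `s = 0` gives the value of the function. -/
noncomputable def deriv (s : Multiset V) (z : V) : ℂ :=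
  ∑ y, eval (F.lin z) (twistedDeriv (s.map fun v => (F.lin v, F.freq y v)) (F.coeff y)) *
    exp (F.freq y z)

lemma exists_linearMap_deriv_cons (s : Multiset V) (z : V) :
    ∃ f : V →ₗ[ℂ] ℂ, ∀ v, F.deriv (v ::ₘ s) z = f v := by
  let P (y : Y) := twistedDeriv (s.map fun v => (F.lin v, F.freq y v)) (F.coeff y)
  refine ⟨∑ y, exp (F.freq y z) • (eval (F.lin z) (derivative (P y)) • F.lin +
    eval (F.lin z) (P y) • F.freq y), fun v => ?_⟩
  simp only [deriv, Multiset.map_cons, twistedDeriv_cons, LinearMap.sum_apply,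
    LinearMap.smul_apply, LinearMap.add_apply, eval_add, eval_smul, smul_eq_mul, P]
  exact Finset.sum_congr rfl fun y _ => by ring

lemma hasDerivAt_deriv (s : Multiset V) (z v : V) (t : ℂ) :
    HasDerivAt (fun t : ℂ => F.deriv s (z + t • v)) (F.deriv (v ::ₘ s) (z + t • v)) t := by
  have hline (f : V →ₗ[ℂ] ℂ) : HasDerivAt (fun t : ℂ => f (z + t • v)) (f v) t := by
    simpa using ((hasDerivAt_id t).mul_const (f v)).const_add (f z)
  unfold deriv
  refine HasDerivAt.fun_sum fun y _ => ?_
  refine (((Polynomial.hasDerivAt _ _).comp t (hline F.lin)).fun_mul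
    (hline (F.freq y)).cexp).congr_deriv ?_
  simp only [Multiset.map_cons, twistedDeriv_cons, eval_add, eval_smul, smul_eq_mul,
    Function.comp_apply]
  ring

lemma differentiable_deriv_line (s : Multiset V) (z v : V) :
    Differentiable ℂ fun t : ℂ => F.deriv s (z + t • v) :=
  fun t => (F.hasDerivAt_deriv s z v t).differentiableAt

lemma iteratedDeriv_deriv_line (s : Multiset V) (z v : V) (n : ℕ) :
    iteratedDeriv n (fun t : ℂ => F.deriv s (z + t • v)) =
      fun t => F.deriv (Multiset.replicate n v + s) (z + t • v) := by
  induction n with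
  | zero => simp
  | succ n ih =>
    rw [iteratedDeriv_succ, ih, Multiset.replicate_succ]
    funext t
    rw [Multiset.cons_add]
    exact (F.hasDerivAt_deriv _ z v t).deriv

lemma deriv_eq_zero_of_span_eq_top {G : Type*} {E : G → V}
    (hE : Submodule.span ℂ (Set.range E) = ⊤) {n : ℕ} {z : V}
    (h : ∀ s : Multiset G, Multiset.card s = n → F.deriv (s.map E) z = 0)
    {s : Multiset V} (hs : Multiset.card s = n) : F.deriv s z = 0 := by
  suffices ∀ (t : Multiset V) (s : Multiset G), Multiset.card t + Multiset.card s = n →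
      F.deriv (t + s.map E) z = 0 by simpa using this s 0 (by simpa using hs)
  intro t
  induction t using Multiset.induction_on with
  | empty => simpa using h
  | cons v t ih =>
    intro s hts
    rw [Multiset.card_cons] at hts
    obtain ⟨f, hf⟩ := F.exists_linearMap_deriv_cons (t + s.map E) z
    have hfE : f = 0 := LinearMap.ext_on_range hE fun σ => by
      rw [← hf, ← Multiset.add_cons, ← Multiset.map_cons, LinearMap.zero_apply]
      exact ih (σ ::ₘ s) (by rw [Multiset.card_cons]; omega)
    rw [Multiset.cons_add, hf, hfE, LinearMap.zero_apply]

lemma norm_deriv_map_le {G J : Type*} [Fintype J] {E : G → V} {x : J → V} {b : G → J → ℂ}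
    (hE : ∀ σ, E σ = ∑ j, b σ j • x j) {κ : ℝ} (hb : ∀ σ j, ‖b σ j‖ ≤ κ) {n : ℕ} {z : V} {B : ℝ}
    (h : ∀ s : Multiset J, Multiset.card s = n → ‖F.deriv (s.map x) z‖ ≤ B)
    {s : Multiset G} (hs : Multiset.card s = n) :
    ‖F.deriv (s.map E) z‖ ≤ (Fintype.card J * κ) ^ n * B := by
  suffices ∀ (t : Multiset G) (s : Multiset J), Multiset.card t + Multiset.card s = n →
      ‖F.deriv (t.map E + s.map x) z‖ ≤ (Fintype.card J * κ) ^ Multiset.card t * B by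
    simpa [hs] using this s 0 (by simpa using hs)
  intro t
  induction t using Multiset.induction_on with
  | empty => simpa using h
  | cons σ t ih =>
    intro s hts
    rw [Multiset.card_cons] at hts
    obtain ⟨f, hf⟩ := F.exists_linearMap_deriv_cons (t.map E + s.map x) z
    have hfx (j : J) : ‖f (x j)‖ ≤ (Fintype.card J * κ) ^ Multiset.card t * B := by
      rw [← hf, ← Multiset.add_cons, ← Multiset.map_cons]
      exact ih (j ::ₘ s) (by rw [Multiset.card_cons]; omega)
    rw [Multiset.map_cons, Multiset.cons_add, hf, hE, map_sum, Multiset.card_cons]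
    calc ‖∑ j, f (b σ j • x j)‖
        ≤ ∑ _j : J, κ * ((Fintype.card J * κ) ^ Multiset.card t * B) :=
          norm_sum_le_of_le _ fun j _ => by
            rw [map_smul, norm_smul]
            exact mul_le_mul (hb σ j) (hfx j) (norm_nonneg _) ((norm_nonneg _).trans (hb σ j))
      _ = (Fintype.card J * κ) ^ (Multiset.card t + 1) * B := by
          rw [Finset.sum_const, Finset.card_univ, nsmul_eq_mul]
          ring

lemma norm_deriv_le {s : Multiset V} {z : V} {A W : ℝ}
    (hcoeff : ∀ y, ‖eval (F.lin z)
      (twistedDeriv (s.map fun v => (F.lin v, F.freq y v)) (F.coeff y))‖ ≤ A)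
    (hfreq : ∀ y, ‖F.freq y z‖ ≤ W) :
    ‖F.deriv s z‖ ≤ Fintype.card Y * (A * Real.exp W) := by
  rw [← nsmul_eq_mul, ← Finset.card_univ]
  refine (norm_sum_le _ _).trans (Finset.sum_le_card_nsmul _ _ _ fun y _ => ?_)
  rw [norm_mul]
  refine mul_le_mul (hcoeff y) ?_ (norm_nonneg _) ((norm_nonneg _).trans (hcoeff y))
  exact (Complex.norm_exp_le_exp_norm _).trans (Real.exp_le_exp.2 (hfreq y))

lemma sum_aeval_derivative_eq_zero {v : V}
    (h : ∀ n : ℕ, F.deriv (Multiset.replicate n v) 0 = 0) (Q : ℂ[X]) :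
    ∑ y, eval 0 (aeval derivative (Q.comp (C (F.lin v) * X + C (F.freq y v))) (F.coeff y)) = 0 := by
  have hn (n : ℕ) : ∑ y, eval 0 (twistedDeriv (Multiset.replicate n (F.lin v, F.freq y v))
      (F.coeff y)) = 0 := by
    simpa [deriv] using h n
  simp only [aeval_derivative_comp, Polynomial.sum, eval_finsetSum, eval_smul, smul_eq_mul]
  rw [Finset.sum_comm]
  exact Finset.sum_eq_zero fun n _ => by rw [← Finset.mul_sum, hn, mul_zero]

/- Along a direction `v` separating the frequencies `w y`, apply the differential operator
`Q(d/dt)` with `Q = (X - w y₀) ^ deg (coeff y₀) * ∏ y ≠ y₀, (X - w y) ^ (deg (coeff y) + 1)`: it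
kills all the terms except the one of `y₀`, of which it leaves the leading coefficient. -/
lemma coeff_eq_zero (hlin : F.lin ≠ 0) (hfreq : Function.Injective F.freq)
    (h : ∀ s : Multiset V, F.deriv s 0 = 0) : F.coeff = 0 := by
  classical
  obtain ⟨v, hlin_v, hfreq_v⟩ := F.exists_lin_ne_zero_and_freq_injective hlin hfreq
  funext y₀
  by_contra hy₀
  let S : ℂ[X] := ∏ y ∈ Finset.univ.erase y₀,
    (X - C (F.freq y v)) ^ ((F.coeff y).natDegree + 1)
  let Q : ℂ[X] := (X - C (F.freq y₀ v)) ^ (F.coeff y₀).natDegree * S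
  have hcomp (y : Y) (n : ℕ) : ((X - C (F.freq y v)) ^ n).comp
      (C (F.lin v) * X + C (F.freq y v)) = C (F.lin v) ^ n * X ^ n := by
    simp [mul_pow]
  have hother (y : Y) (hy : y ≠ y₀) :
      aeval derivative (Q.comp (C (F.lin v) * X + C (F.freq y v))) (F.coeff y) = 0 := by
    refine aeval_derivative_eq_zero (Nat.lt_succ_self _) ?_
    have hdvd : (X - C (F.freq y v)) ^ ((F.coeff y).natDegree + 1) ∣ Q :=
      (Finset.dvd_prod_of_mem _ (Finset.mem_erase.2 ⟨hy, Finset.mem_univ y⟩)).mul_left _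
    refine (Dvd.intro_left _ (hcomp y _).symm).trans ?_
    exact (compRingHom (C (F.lin v) * X + C (F.freq y v))).map_dvd hdvd
  have hS : (S.comp (C (F.lin v) * X + C (F.freq y₀ v))).coeff 0 ≠ 0 := by
    simp only [S, coeff_zero_eq_eval_zero, eval_comp, eval_prod, eval_add, eval_mul, eval_C, eval_X,
      eval_pow, eval_sub, mul_zero, zero_add]
    exact Finset.prod_ne_zero_iff.2 fun y hy =>
      pow_ne_zero _ (sub_ne_zero.2 (hfreq_v.ne (Finset.ne_of_mem_erase hy).symm))
  have hzero := F.sum_aeval_derivative_eq_zero (v := v) (fun n => h _) Q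
  rw [Finset.sum_eq_single y₀ (fun y _ hy => by rw [hother y hy, eval_zero]) (by simp), mul_comp,
    hcomp, mul_assoc, ← C_pow, ← smul_eq_C_mul, map_smul, LinearMap.smul_apply,
    aeval_derivative_X_pow_natDegree_mul, eval_smul, eval_C, smul_eq_mul] at hzero
  exact mul_ne_zero (pow_ne_zero _ hlin_v) (mul_ne_zero hS (mul_ne_zero
    (Nat.cast_ne_zero.2 (Nat.factorial_ne_zero _)) (leadingCoeff_ne_zero.2 hy₀))) hzero

end ExpPoly

lemma exists_eq_prod_sub_mul_of_count_le_analyticOrderAt (M : Multiset ℂ) {g : ℂ → ℂ}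
    (hg : Differentiable ℂ g) (hM : ∀ s, (M.count s : ℕ∞) ≤ analyticOrderAt g s) :
    ∃ h : ℂ → ℂ, Differentiable ℂ h ∧ ∀ t, g t = (M.map fun s => t - s).prod * h t := by
  induction M using Multiset.induction_on generalizing g with
  | empty => exact ⟨g, hg, by simp⟩
  | cons s M ih =>
    have hgs : g s = 0 := by
      refine apply_eq_zero_of_analyticOrderAt_ne_zero fun h0 => ?_
      simpa [h0] using hM s
    have hd : Differentiable ℂ (dslope g s) := by
      rw [← differentiableOn_univ] at hg ⊢
      exact (Complex.differentiableOn_dslope Filter.univ_mem).2 hg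
    have hmul : g = (fun t => t - s) * dslope g s := by
      funext t
      simpa [hgs] using (sub_smul_dslope g s t).symm
    obtain ⟨h, hh, hgh⟩ := ih hd fun s' => by
      have hs' := hM s'
      rw [hmul, analyticOrderAt_mul (by fun_prop) (hd.analyticAt s')] at hs'
      obtain rfl | hne := eq_or_ne s' s
      · have hone : analyticOrderAt (fun t : ℂ => t - s') s' = 1 :=
          AnalyticAt.analyticOrderAt_eq_one_of_zero_deriv_ne_zero (by fun_prop) (by simp) (by simp)
        rw [hone, Multiset.count_cons_self, Nat.cast_add, Nat.cast_one, add_comm] at hs'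
        exact (ENat.add_le_add_iff_left ENat.one_ne_top).1 hs'
      · have hzero : analyticOrderAt (fun t : ℂ => t - s) s' = 0 :=
          analyticOrderAt_eq_zero.2 (Or.inr (sub_ne_zero.2 hne))
        rwa [hzero, Multiset.count_cons_of_ne hne, zero_add] at hs'
    refine ⟨h, hh, fun t => ?_⟩
    rw [hmul, Pi.mul_apply, hgh, Multiset.map_cons, Multiset.prod_cons, mul_assoc]

lemma exists_eq_prod_sub_pow_mul {g : ℂ → ℂ} (hg : Differentiable ℂ g) (Z : Finset ℂ) (m : ℕ)
    (hZ : ∀ s ∈ Z, ∀ i < m, iteratedDeriv i g s = 0) :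
    ∃ h : ℂ → ℂ, Differentiable ℂ h ∧ ∀ t, g t = (∏ s ∈ Z, (t - s)) ^ m * h t := by
  obtain ⟨h, hh, hgh⟩ := exists_eq_prod_sub_mul_of_count_le_analyticOrderAt (m • Z.val) hg
    fun s => (natCast_le_analyticOrderAt_iff_iteratedDeriv_eq_zero (hg.analyticAt s)).2
      fun i hi => by
        rw [Multiset.count_nsmul] at hi
        have hs : s ∈ Z.val := Multiset.count_ne_zero.1 fun h => by simp [h] at hi
        rw [Multiset.count_eq_one_of_mem Z.nodup hs, mul_one] at hi
        exact hZ s hs i hi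
  exact ⟨h, hh, fun t => by rw [hgh, Multiset.map_nsmul, Multiset.prod_nsmul]; rfl⟩

lemma norm_iteratedDeriv_zero_le_of_zeros {g : ℂ → ℂ} (hg : Differentiable ℂ g) {Z : Finset ℂ}
    {m : ℕ} (hZ : ∀ s ∈ Z, ∀ i < m, iteratedDeriv i g s = 0) {ρ R B : ℝ} (hρ : 0 ≤ ρ)
    (hZρ : ∀ s ∈ Z, ‖s‖ ≤ ρ) (hR : ρ + 1 ≤ R) (hB : ∀ t, ‖t‖ = R → ‖g t‖ ≤ B) (n : ℕ) :
    ‖iteratedDeriv n g 0‖ ≤ n.factorial * (((ρ + 1) / (R - ρ)) ^ (m * Z.card) * B) := by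
  have hRρ : 0 < R - ρ := by linarith
  obtain ⟨h, hh, hgh⟩ := exists_eq_prod_sub_pow_mul hg Z m hZ
  have hprod (t : ℂ) : ‖(∏ s ∈ Z, (t - s)) ^ m‖ = (∏ s ∈ Z, ‖t - s‖) ^ m := by
    rw [norm_pow, norm_prod]
  have hh_sphere : ∀ t, ‖t‖ = R → ‖h t‖ ≤ B / (R - ρ) ^ (m * Z.card) := fun t ht => by
    have hlower : (R - ρ) ^ Z.card ≤ ∏ s ∈ Z, ‖t - s‖ := by
      rw [← Finset.prod_const]
      refine Finset.prod_le_prod (fun _ _ => hRρ.le) fun s hs => ?_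
      linarith [norm_sub_norm_le t s, hZρ s hs]
    rw [le_div_iff₀ (by positivity), mul_comm, mul_comm m, pow_mul]
    calc ((R - ρ) ^ Z.card) ^ m * ‖h t‖ ≤ (∏ s ∈ Z, ‖t - s‖) ^ m * ‖h t‖ := by gcongr
      _ = ‖g t‖ := by rw [hgh, norm_mul, hprod]
      _ ≤ B := hB t ht
  have hh_unit : ∀ t, ‖t‖ = 1 → ‖h t‖ ≤ B / (R - ρ) ^ (m * Z.card) := fun t ht => by
    refine Complex.norm_le_of_forall_mem_frontier_norm_le (U := Metric.ball 0 R)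
      Metric.isBounded_ball hh.diffContOnCl (fun s hs => ?_) ?_
    · rw [frontier_ball _ (by linarith), mem_sphere_zero_iff_norm] at hs
      exact hh_sphere s hs
    · rw [closure_ball _ (by linarith), mem_closedBall_zero_iff]
      linarith
  have hg_unit : ∀ t ∈ Metric.sphere (0 : ℂ) 1,
      ‖g t‖ ≤ ((ρ + 1) / (R - ρ)) ^ (m * Z.card) * B := fun t ht => by
    rw [mem_sphere_zero_iff_norm] at ht
    have hupper : ∏ s ∈ Z, ‖t - s‖ ≤ (ρ + 1) ^ Z.card := by
      rw [← Finset.prod_const]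
      refine Finset.prod_le_prod (fun _ _ => norm_nonneg _) fun s hs => ?_
      linarith [norm_sub_le t s, hZρ s hs]
    calc ‖g t‖ = (∏ s ∈ Z, ‖t - s‖) ^ m * ‖h t‖ := by rw [hgh, norm_mul, hprod]
      _ ≤ ((ρ + 1) ^ Z.card) ^ m * (B / (R - ρ) ^ (m * Z.card)) := by
          gcongr
          exact hh_unit t ht
      _ = ((ρ + 1) / (R - ρ)) ^ (m * Z.card) * B := by
          rw [← pow_mul, mul_comm Z.card, div_pow]
          ring
  simpa using Complex.norm_iteratedDeriv_le_of_forall_mem_sphere_norm_le n one_pos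
    hg.diffContOnCl hg_unit

/- If all the derivatives of order less than `|s|` vanish at the points `z + t • x j`, apply the
Schwarz lemma on the line through `z` in the direction which occurs most often in `s`. -/
lemma ExpPoly.exists_norm_deriv_le_of_zeros {V Y J : Type*} [AddCommGroup V] [Module ℂ V]
    [Fintype Y] [Fintype J] [Nonempty J] (F : ExpPoly V Y) {x : J → V} {s : Multiset J} {z : V}
    {Z : J → Finset ℂ} {N : ℕ} {ρ R B : ℝ} (hZ_card : ∀ j, (Z j).card = N) (hρ : 0 ≤ ρ)
    (hZρ : ∀ j, ∀ t ∈ Z j, ‖t‖ ≤ ρ) (hR : ρ + 1 ≤ R)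
    (hzero : ∀ j, ∀ t ∈ Z j, ∀ s' : Multiset J, Multiset.card s' < Multiset.card s →
      F.deriv (s'.map x) (z + t • x j) = 0)
    (hB : ∀ j, ∀ s' : Multiset J, Multiset.card s' ≤ Multiset.card s → ∀ t : ℂ, ‖t‖ = R →
      ‖F.deriv (s'.map x) (z + t • x j)‖ ≤ B) :
    ∃ r, Multiset.card s ≤ Fintype.card J * r ∧ r ≤ Multiset.card s ∧
      ‖F.deriv (s.map x) z‖ ≤ r.factorial * (((ρ + 1) / (R - ρ)) ^ (r * N) * B) := by
  classical
  obtain ⟨j, hj⟩ : ∃ j, Multiset.card s ≤ Fintype.card J * s.count j := by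
    have hsum : ∑ _j : J, Multiset.card s = ∑ j : J, Fintype.card J * s.count j := by
      rw [← Finset.mul_sum, Multiset.sum_count_eq_card fun _ _ => Finset.mem_univ _]
      simp
    obtain ⟨j, -, hj⟩ := Finset.exists_le_of_sum_le Finset.univ_nonempty hsum.le
    exact ⟨j, hj⟩
  obtain ⟨s', hs'⟩ := Multiset.le_iff_exists_add.1 (Multiset.le_count_iff_replicate_le.1 le_rfl :
    Multiset.replicate (s.count j) j ≤ s)
  have hcard : Multiset.card s = s.count j + Multiset.card s' := by
    conv_lhs => rw [hs']
    simp
  have hiter (n : ℕ) (t : ℂ) :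
      iteratedDeriv n (fun t : ℂ => F.deriv (s'.map x) (z + t • x j)) t =
        F.deriv ((Multiset.replicate n j + s').map x) (z + t • x j) := by
    rw [F.iteratedDeriv_deriv_line, Multiset.map_add, Multiset.map_replicate]
  have hschwarz := norm_iteratedDeriv_zero_le_of_zeros
    (F.differentiable_deriv_line (s'.map x) z (x j)) (Z := Z j) (m := s.count j)
    (fun t ht i hi => by
      rw [hiter]
      refine hzero j t ht _ ?_
      rw [Multiset.card_add, Multiset.card_replicate]
      omega) hρ (hZρ j) hR (hB j s' (by omega)) (s.count j)
  rw [hiter, ← hs', zero_smul, add_zero, hZ_card] at hschwarz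
  exact ⟨s.count j, hj, Multiset.count_le_card j s, hschwarz⟩

section House

variable {K : Type u} [Field K] [NumberField K]

/-- `c` is a constant for Siegel's lemma over `K`: a homogeneous linear system over `𝓞 K` with at
least twice as many unknowns as equations, whose coefficients have house at most `A`, has a nonzero
solution of house at most `c` times `A` times the number of unknowns. -/
def IsSiegelConst (K : Type u) [Field K] [NumberField K] (c : ℝ) : Prop :=
  ∀ (α β : Type u) [Fintype α] [Fintype β] (a : Matrix α β (𝓞 K)) (A : ℝ), 1 ≤ A →
    (∀ k l, house (a k l : K) ≤ A) → 2 * Fintype.card α ≤ Fintype.card β → 0 < Fintype.card β →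
    ∃ ξ : β → 𝓞 K, ξ ≠ 0 ∧ a *ᵥ ξ = 0 ∧ ∀ l, house (ξ l : K) ≤ c * (Fintype.card β * A)

lemma IsSiegelConst.mono {c c' : ℝ} (hc : IsSiegelConst K c) (hcc' : c ≤ c') :
    IsSiegelConst K c' := fun α β _ _ a A hA ha hcard hβ => by
  obtain ⟨ξ, hξ, haξ, hle⟩ := hc α β a A hA ha hcard hβ
  exact ⟨ξ, hξ, haξ, fun l => (hle l).trans (by gcongr)⟩

-- The constant of the library's Siegel lemma is private, so it can only be quantified over.
lemma exists_const_of_siegel (K : Type u) [Field K] [NumberField K] : ∃ c : ℝ,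
    ∀ (α β : Type u) [Fintype α] [Fintype β] (a : Matrix α β (𝓞 K)) (A : ℝ), a ≠ 0 →
      0 < Fintype.card α → Fintype.card α < Fintype.card β → (∀ k l, house (a k l : K) ≤ A) →
      ∃ ξ : β → 𝓞 K, ξ ≠ 0 ∧ a *ᵥ ξ = 0 ∧ ∀ l, house (ξ l : K) ≤ c * (c * Fintype.card β * A) ^
        (Fintype.card α / (Fintype.card β - Fintype.card α) : ℝ) := by
  classical
  exact ⟨_, fun α β _ _ a A ha h0 hlt hA =>
    house.exists_ne_zero_int_vec_house_le K a ha h0 hlt rfl hA rfl⟩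

lemma exists_isSiegelConst (K : Type u) [Field K] [NumberField K] :
    ∃ c : ℝ, IsSiegelConst K c := by
  obtain ⟨c, hc⟩ := exists_const_of_siegel K
  have hC1 : 1 ≤ max 1 |c| := le_max_left _ _
  have hcC : |c| ≤ max 1 |c| := le_max_right _ _
  generalize max 1 |c| = C at hC1 hcC
  refine ⟨C * C, fun α β _ _ a A hA hle hcard hβ => ?_⟩
  have hβA : 1 ≤ Fintype.card β * A :=
    one_le_mul_of_one_le_of_one_le (by exact_mod_cast hβ) hA
  obtain rfl | ha := eq_or_ne a 0
  · have : Nonempty β := Fintype.card_pos_iff.1 hβ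
    refine ⟨1, one_ne_zero, Matrix.zero_mulVec _, fun _ => ?_⟩
    calc house ((1 : 𝓞 K) : K) = 1 := by simpa using house_intCast (K := K) 1
      _ ≤ C * C * (Fintype.card β * A) :=
        one_le_mul_of_one_le_of_one_le (one_le_mul_of_one_le_of_one_le hC1 hC1) hβA
  have hα : 0 < Fintype.card α := by
    obtain ⟨k, -⟩ := Function.ne_iff.1 ha
    exact Fintype.card_pos_iff.2 ⟨k⟩
  obtain ⟨ξ, hξ, haξ, hξle⟩ := hc α β a A ha hα (by omega) hle
  refine ⟨ξ, hξ, haξ, fun l => (hξle l).trans ?_⟩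
  have hα1 : (1 : ℝ) ≤ Fintype.card α := by exact_mod_cast hα
  have hαβ : 2 * (Fintype.card α : ℝ) ≤ Fintype.card β := by exact_mod_cast hcard
  set e : ℝ := Fintype.card α / (Fintype.card β - Fintype.card α)
  have he0 : 0 ≤ e := div_nonneg (by linarith) (by linarith)
  have he1 : e ≤ 1 := div_le_one_of_le₀ (by linarith) (by linarith)
  have hbase : |c * Fintype.card β * A| ≤ C * (Fintype.card β * A) := by
    rw [mul_assoc, abs_mul, abs_of_pos (zero_lt_one.trans_le hβA)]
    gcongr
  calc c * (c * Fintype.card β * A) ^ e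
      ≤ |c| * |(c * Fintype.card β * A) ^ e| := (le_abs_self _).trans (abs_mul _ _).le
    _ ≤ |c| * |c * Fintype.card β * A| ^ e := by
        gcongr
        exact Real.abs_rpow_le_abs_rpow _ _
    _ ≤ C * (C * (Fintype.card β * A)) ^ e := by gcongr
    _ ≤ C * (C * (Fintype.card β * A)) ^ (1 : ℝ) := by
        gcongr
        exact one_le_mul_of_one_le_of_one_le hC1 hβA
    _ = C * C * (Fintype.card β * A) := by rw [Real.rpow_one, mul_assoc]

lemma house_algEquiv_apply_le (σ : K ≃ₐ[ℚ] K) (x : K) : house (σ x) ≤ house x :=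
  (pi_norm_le_iff_of_nonneg (house_nonneg x)).2 fun φ =>
    norm_embedding_le_house x (φ.comp (σ : K →+* K))

lemma one_le_norm_mul_house_pow (ι : K →+* ℂ) {x : 𝓞 K} (hx : x ≠ 0) :
    1 ≤ ‖ι x‖ * house (x : K) ^ (finrank ℚ K - 1) := by
  refine le_trans ?_ (norm_norm_le_norm_mul_house_pow (x : K) ι)
  rw [← Algebra.coe_norm_int, ← Rat.norm_cast_real, Rat.cast_intCast, Real.norm_eq_abs]
  exact_mod_cast Int.one_le_abs (Algebra.norm_ne_zero_iff.2 hx)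

lemma eq_zero_of_norm_mul_pow_lt_one (ι : K →+* ℂ) {x : 𝓞 K} {A : ℝ} (hA : house (x : K) ≤ A)
    (h : ‖ι x‖ * A ^ (finrank ℚ K - 1) < 1) : x = 0 := by
  by_contra hx
  have := house_nonneg (x : K)
  exact h.not_ge ((one_le_norm_mul_house_pow ι hx).trans (by gcongr))

lemma house_eval_twistedDeriv_X_pow_le {s : Multiset (K × K)} {a : ℕ} {B Z : ℝ} (hZ : 1 ≤ Z)
    (hs : ∀ p ∈ s, house p.1 * a + house p.2 ≤ B) {x : K} (hx : house x ≤ Z) :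
    house (eval x (twistedDeriv s (X ^ a))) ≤ B ^ Multiset.card s * Z ^ a := by
  rw [house, map_eval_twistedDeriv_X_pow, ← Multiset.card_map (Prod.map _ _) s]
  refine norm_eval_twistedDeriv_X_pow_le hZ (fun p hp => ?_) hx
  obtain ⟨q, hq, rfl⟩ := Multiset.mem_map.1 hp
  exact hs q hq

end House

section Parameters

/-- The parameters of the auxiliary function, for a field of degree `D`, height bounds `κ` and an
extrapolation gain `M`: its frequencies lie in a box of side `L`, and it has zeros of order `T` at
the lattice points of a box of side `N`. By `exists_radius`, small derivatives of order `n` are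
extrapolated from these zeros by means of a disc of radius `R`: the `N` zeros on a line save a
factor `n ^ M` for each unit of their common multiplicity. -/
structure IsAdmissible (D κ M N L T : ℕ) : Prop where
  two_le : 2 ≤ T
  side_pos : 0 < N
  freq_pos : 0 < L
  card_le : 2 * (T ^ D * N ^ D) ≤ L * L ^ D
  deg_mul_le : D * κ ≤ T
  freq_le : L ≤ T
  mul_side_le : κ * N ≤ T
  two_mul_freq_le : 2 * κ * L ≤ T
  sq_mul_le : κ ^ 2 * N * L ≤ T
  exists_radius : ∀ n, T ≤ n → ∃ R : ℕ, N + 1 ≤ R ∧ κ * (N + R) ≤ n ∧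
    Real.exp (κ * L * (N + R)) ≤ n ^ n ∧ ((N + 1 : ℝ) / (R - N)) ^ N ≤ (1 / n) ^ M

lemma exists_pow_le_lt_succ_pow {k : ℕ} (hk : k ≠ 0) (n : ℕ) :
    ∃ R : ℕ, R ^ k ≤ n ∧ n < (R + 1) ^ k := by
  have hex : ∃ R : ℕ, n < (R + 1) ^ k := ⟨n, (Nat.lt_succ_self n).trans_le (Nat.le_self_pow hk _)⟩
  classical
  refine ⟨Nat.find hex, ?_, Nat.find_spec hex⟩
  obtain h | h := Nat.eq_zero_or_pos (Nat.find hex)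
  · simp [h, hk]
  · have hmin := Nat.find_min hex (Nat.sub_lt h one_pos)
    rwa [Nat.sub_add_cancel (by exact h), not_lt] at hmin

lemma div_sub_pow_le_one_div_pow {N R n : ℕ} (D M : ℕ) (hN : N = 4 * (D + 1) * M)
    (hR : 4 * (N + 1) ^ 2 ≤ R) (hn : n ≠ 0) (hnR : n < (R + 1) ^ (D + 1)) :
    ((N + 1 : ℝ) / (R - N)) ^ N ≤ (1 / n) ^ M := by
  have hR2 : 2 ≤ R := by nlinarith
  have hRN : 4 * ((N : ℝ) + 1) ^ 2 ≤ R := by exact_mod_cast hR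
  have hhalf : (R : ℝ) / 2 ≤ R - N := by nlinarith [(Nat.cast_nonneg N : (0 : ℝ) ≤ N)]
  have hRpos : (0 : ℝ) < R := by positivity
  have hsub : (0 : ℝ) < R - N := by linarith
  have hratio : ((N + 1 : ℝ) / (R - N)) ^ 2 ≤ 1 / R := by
    rw [div_pow, div_le_div_iff₀ (pow_pos hsub 2) hRpos]
    nlinarith
  have hnR' : (n : ℝ) ≤ R ^ (2 * (D + 1)) := by
    have : n ≤ R ^ (2 * (D + 1)) := by
      rw [pow_mul]
      exact hnR.le.trans (Nat.pow_le_pow_left (by nlinarith) _)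
    exact_mod_cast this
  calc ((N + 1 : ℝ) / (R - N)) ^ N = (((N + 1 : ℝ) / (R - N)) ^ 2) ^ (2 * (D + 1) * M) := by
        rw [← pow_mul]
        congr 1
        rw [hN]
        ring
    _ ≤ (1 / R) ^ (2 * (D + 1) * M) := by gcongr
    _ = (1 / R ^ (2 * (D + 1))) ^ M := by rw [pow_mul, one_div_pow]
    _ ≤ (1 / n) ^ M := by gcongr

lemma exists_radius {D κ M N s n : ℕ} (hD : 0 < D) (hN : N = 4 * (D + 1) * M) (hκs : 2 * κ ≤ s)
    (hNs : 4 * (N + 1) ^ 2 ≤ s) (hexp : Real.exp (4 * κ * N) ≤ s) (hn : s ^ (D + 1) ≤ n) :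
    ∃ R : ℕ, N + 1 ≤ R ∧ κ * (N + R) ≤ n ∧
      Real.exp (κ * (2 * N * s ^ D : ℕ) * (N + R)) ≤ n ^ n ∧
        ((N + 1 : ℝ) / (R - N)) ^ N ≤ (1 / n) ^ M := by
  obtain ⟨R, hRn, hnR⟩ := exists_pow_le_lt_succ_pow D.succ_ne_zero n
  have hsn : s ≤ n := (Nat.le_self_pow D.succ_ne_zero s).trans hn
  have hsR : s ≤ R := by
    by_contra! hRs
    exact (hnR.trans_le (Nat.pow_le_pow_left hRs _)).not_ge hn
  have hNR : N + 1 ≤ R := by nlinarith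
  refine ⟨R, hNR, ?_, ?_, div_sub_pow_le_one_div_pow D M hN (by omega) (by nlinarith) hnR⟩
  · calc κ * (N + R) ≤ κ * (R + R) := by gcongr; omega
      _ = 2 * κ * R := by ring
      _ ≤ R * R := by gcongr; omega
      _ = R ^ 2 := (sq R).symm
      _ ≤ R ^ (D + 1) := Nat.pow_le_pow_right (by omega) (by omega)
      _ ≤ n := hRn
  · have hle : κ * (2 * N * s ^ D) * (N + R) ≤ n * (4 * κ * N) := by
      calc κ * (2 * N * s ^ D) * (N + R) ≤ κ * (2 * N * R ^ D) * (R + R) := by gcongr; omega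
        _ = R ^ (D + 1) * (4 * κ * N) := by ring
        _ ≤ n * (4 * κ * N) := by gcongr
    calc Real.exp (κ * (2 * N * s ^ D : ℕ) * (N + R))
        ≤ Real.exp (n * (4 * κ * N)) := Real.exp_le_exp.2 (by exact_mod_cast hle)
      _ = Real.exp (4 * κ * N) ^ n := Real.exp_nat_mul _ _
      _ ≤ n ^ n := by
          gcongr
          exact hexp.trans (by exact_mod_cast hsn)

lemma exists_isAdmissible {D κ M : ℕ} (hD : 0 < D) (hM : 0 < M) :
    ∃ N L T, IsAdmissible D κ M N L T := by
  obtain ⟨N, hN⟩ : ∃ N, N = 4 * (D + 1) * M := ⟨_, rfl⟩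
  have hN0 : 0 < N := hN ▸ by positivity
  obtain ⟨e, he⟩ := exists_nat_ge (Real.exp (4 * κ * N))
  obtain ⟨s, hs⟩ : ∃ s, s = 2 + D * κ + 2 * N + 4 * κ * N + 4 * (N + 1) ^ 2 +
    2 * κ ^ 2 * N ^ 2 + e := ⟨_, rfl⟩
  have hs2 : 2 ≤ s := by omega
  have hκN : κ ≤ κ * N := Nat.le_mul_of_pos_right _ hN0
  have hκN4 : 4 * (κ * N) ≤ s := by rw [← mul_assoc]; omega
  have hsT : s ≤ s ^ (D + 1) := Nat.le_self_pow D.succ_ne_zero s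
  have hsD {c : ℕ} (hc : c ≤ s) : c * s ^ D ≤ s ^ (D + 1) := by
    rw [pow_succ']
    exact Nat.mul_le_mul_right _ hc
  refine ⟨N, 2 * N * s ^ D, s ^ (D + 1),
    { two_le := by omega
      side_pos := hN0
      freq_pos := by positivity
      card_le := ?_
      deg_mul_le := by omega
      freq_le := hsD (by omega)
      mul_side_le := by omega
      two_mul_freq_le := by linarith [hsD (c := 4 * κ * N) (by omega)]
      sq_mul_le := by linarith [hsD (c := 2 * κ ^ 2 * N ^ 2) (by omega)]
      exists_radius := fun n hn =>
        exists_radius hD hN (by omega) (by omega)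
          (he.trans (by exact_mod_cast (by omega : e ≤ s))) hn }⟩
  have hpow : 2 ≤ 2 ^ (D + 1) * N := by
    rw [pow_succ']
    exact (Nat.le_mul_of_pos_right 2 (by positivity)).trans (Nat.le_mul_of_pos_right _ hN0)
  calc 2 * ((s ^ (D + 1)) ^ D * N ^ D)
      ≤ 2 ^ (D + 1) * N * ((s ^ (D + 1)) ^ D * N ^ D) := by gcongr
    _ = 2 * N * s ^ D * (2 * N * s ^ D) ^ D := by ring

end Parameters

section Lattice

variable {K : Type u} [Field K] [NumberField K]

variable (K) in
/-- The box of side `N`, whose points are the coordinates of algebraic integers of `K`. -/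
abbrev Box (N : ℕ) : Type u := Free.ChooseBasisIndex ℤ (𝓞 K) → Fin N

/-- The algebraic integer with coordinates `m` in the integral basis of `K`. -/
noncomputable def boxPoint {N : ℕ} (m : Box K N) : 𝓞 K :=
  (RingOfIntegers.basis K).equivFun.symm fun j => (m j : ℤ)

lemma boxPoint_eq_sum {N : ℕ} (m : Box K N) :
    boxPoint m = ∑ j, (m j : ℕ) • RingOfIntegers.basis K j := by
  simp [boxPoint, Basis.equivFun_symm_apply]

lemma boxPoint_injective (N : ℕ) : Function.Injective (boxPoint (K := K) (N := N)) :=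
  (RingOfIntegers.basis K).equivFun.symm.injective.comp fun m m' h =>
    funext fun j => Fin.ext (by exact_mod_cast congrFun h j)

lemma boxPoint_update {N : ℕ} [DecidableEq (Free.ChooseBasisIndex ℤ (𝓞 K))]
    (m : Box K N) (j : Free.ChooseBasisIndex ℤ (𝓞 K)) (k : Fin N) :
    boxPoint (Function.update m j k) =
      boxPoint m + ((k : ℤ) - (m j : ℤ)) • RingOfIntegers.basis K j := by
  have hcoord : (fun i => ((Function.update m j k i : Fin N) : ℤ)) =
      (fun i => (m i : ℤ)) + ((k : ℤ) - m j) • Pi.single j (1 : ℤ) := by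
    funext i
    obtain rfl | hi := eq_or_ne i j <;> simp_all
  rw [boxPoint, hcoord, map_add, map_smul, Basis.equivFun_symm_apply (x := Pi.single j 1)]
  simp [boxPoint, Pi.single_apply]

variable (K) in
/-- The sum of the houses of the integral basis of `K`, which controls the house of the points of
the boxes. -/
noncomputable def basisHouse : ℝ := ∑ j, house (RingOfIntegers.basis K j : K)

lemma house_basis_le (j : Free.ChooseBasisIndex ℤ (𝓞 K)) :
    house (RingOfIntegers.basis K j : K) ≤ basisHouse K :=
  Finset.single_le_sum (f := fun j => house (RingOfIntegers.basis K j : K))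
    (fun _ _ => house_nonneg _) (Finset.mem_univ j)

variable (K) in
lemma basisHouse_nonneg : 0 ≤ basisHouse K := Finset.sum_nonneg fun _ _ => house_nonneg _

lemma house_boxPoint_le {N : ℕ} (m : Box K N) :
    house (boxPoint m : K) ≤ basisHouse K * N := by
  rw [boxPoint_eq_sum, RingOfIntegers.coe_eq_algebraMap, basisHouse, Finset.sum_mul, map_sum]
  refine (house_sum_le_sum_house _ _).trans (Finset.sum_le_sum fun j _ => ?_)
  rw [map_nsmul, nsmul_eq_mul, house_nat_mul, mul_comm]
  have hm : (m j : ℕ) ≤ N := (m j).2.le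
  gcongr
  exact house_nonneg _

end Lattice

/-- The setting of the transcendence argument. Let `K` be Galois over `ℚ` with group `G`. The
numbers `u σ = ε σ * w σ` are such that `exp (∑ σ, σ x * u σ)` is algebraic for all integers `x`
of `K`, and `value b x` is this exponential multiplied by a power of the denominator `den`, with
`b` a bound for `x`. The vectors `(w σ * σ x)_σ`, for `x` in `𝓞 K`, form a lattice of `G → ℂ`. -/
structure ExpLattice {K : Type u} [Field K] [NumberField K] (ι : K →+* ℂ) where
  w : (K ≃ₐ[ℚ] K) → ℂ
  w_ne_zero : ∀ σ, w σ ≠ 0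
  w_one : w 1 = 1
  ε : (K ≃ₐ[ℚ] K) → 𝓞 K
  den : ℕ
  den_ne_zero : den ≠ 0
  growth : ℕ
  value : ℕ → 𝓞 K → 𝓞 K
  value_eq : ∀ (b : ℕ) (x : 𝓞 K), house (x : K) ≤ b →
    ι (value b x) = den ^ b * exp (∑ σ, ι (ε σ * σ • x : 𝓞 K) * w σ)
  house_value_le : ∀ (b : ℕ) (x : 𝓞 K), house (x : K) ≤ b → house (value b x : K) ≤ growth ^ b

namespace ExpLattice

variable {K : Type u} [Field K] [NumberField K] {ι : K →+* ℂ} (Λ : ExpLattice ι)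

/-- The embedding of the lattice `𝓞 K` in `G → ℂ`. -/
noncomputable def emb : 𝓞 K →+ ((K ≃ₐ[ℚ] K) → ℂ) where
  toFun x σ := Λ.w σ * ι (σ • x : 𝓞 K)
  map_zero' := by ext; simp
  map_add' x y := by ext; simp [mul_add]

lemma emb_apply (x : 𝓞 K) (σ : K ≃ₐ[ℚ] K) : Λ.emb x σ = Λ.w σ * ι (σ • x : 𝓞 K) := rfl

lemma emb_apply_one (x : 𝓞 K) : Λ.emb x 1 = ι x := by
  rw [emb_apply, w_one, one_mul, one_smul]

/-- The linear form whose exponential takes the value `exp (∑ σ, σ (x * y) * u σ)` at the lattice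
point `x`. -/
noncomputable def freq (y : 𝓞 K) : ((K ≃ₐ[ℚ] K) → ℂ) →ₗ[ℂ] ℂ :=
  ∑ σ, ι (Λ.ε σ * σ • y : 𝓞 K) • LinearMap.proj σ

lemma freq_emb (x y : 𝓞 K) :
    Λ.freq y (Λ.emb x) = ∑ σ, ι (Λ.ε σ * σ • (x * y) : 𝓞 K) * Λ.w σ := by
  simp only [freq, LinearMap.sum_apply, LinearMap.smul_apply, LinearMap.proj_apply, emb_apply,
    smul_eq_mul]
  refine Finset.sum_congr rfl fun σ _ => ?_
  simp only [RingOfIntegers.coe_eq_algebraMap, smul_mul', map_mul]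
  ring

lemma freq_basisFun (y : 𝓞 K) (σ : K ≃ₐ[ℚ] K) :
    Λ.freq y (Pi.basisFun ℂ _ σ) = ι (Λ.ε σ * σ • y : 𝓞 K) := by
  classical
  simp [freq, Pi.single_apply]

lemma freq_injective (hε : Λ.ε ≠ 0) : Function.Injective Λ.freq := fun y y' h => by
  obtain ⟨σ, hσ⟩ := Function.ne_iff.1 hε
  have hι := congrArg (fun f => f (Pi.basisFun ℂ _ σ)) h
  simp only [freq_basisFun] at hι
  exact MulAction.injective σ
    (mul_left_cancel₀ hσ (RingOfIntegers.coe_injective (ι.injective hι)))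

lemma norm_freq_emb_le (x y : 𝓞 K) :
    ‖Λ.freq y (Λ.emb x)‖ ≤
      (∑ σ, ‖Λ.w σ‖ * house (Λ.ε σ : K)) * (house (x : K) * house (y : K)) := by
  rw [freq_emb, Finset.sum_mul]
  refine norm_sum_le_of_le _ fun σ _ => ?_
  rw [norm_mul, mul_comm, mul_assoc]
  gcongr
  refine (norm_embedding_le_house _ ι).trans ?_
  rw [smul_mul', RingOfIntegers.coe_eq_algebraMap, map_mul, map_mul]
  refine (house_mul_le _ _).trans (mul_le_mul_of_nonneg_left ((house_mul_le _ _).trans ?_)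
    (house_nonneg _))
  exact mul_le_mul (house_algEquiv_apply_le σ _) (house_algEquiv_apply_le σ _) (house_nonneg _)
    (house_nonneg _)

lemma emb_boxPoint_add {N : ℕ} [DecidableEq (Free.ChooseBasisIndex ℤ (𝓞 K))]
    (m : Box K N) (j : Free.ChooseBasisIndex ℤ (𝓞 K)) (k : Fin N) :
    Λ.emb (boxPoint m) + ((k : ℂ) - m j) • Λ.emb (RingOfIntegers.basis K j) =
      Λ.emb (boxPoint (Function.update m j k)) := by
  rw [boxPoint_update, map_add, map_zsmul, ← Int.cast_smul_eq_zsmul ℂ]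
  simp

lemma exists_basisFun_eq_sum_emb : ∃ b : (K ≃ₐ[ℚ] K) → Free.ChooseBasisIndex ℤ (𝓞 K) → ℂ,
    ∀ σ, Pi.basisFun ℂ _ σ = ∑ j, b σ j • Λ.emb (RingOfIntegers.basis K j) := by
  classical
  let B := canonicalEmbedding.latticeBasis K
  let φ (σ : K ≃ₐ[ℚ] K) : K →+* ℂ := ι.comp (σ : K →+* K)
  have hφ : Function.Injective φ := fun σ τ h =>
    AlgEquiv.ext fun x => ι.injective (RingHom.congr_fun h x)
  refine ⟨fun σ j => B.repr (Pi.single (φ σ) (Λ.w σ)⁻¹) j, fun σ => funext fun τ => ?_⟩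
  have hτ := congrFun (B.sum_repr (Pi.single (φ σ) (Λ.w σ)⁻¹)) (φ τ)
  simp only [B, Finset.sum_apply, Pi.smul_apply, canonicalEmbedding.latticeBasis_apply,
    canonicalEmbedding.apply_at, integralBasis_apply, smul_eq_mul] at hτ
  simp only [Finset.sum_apply, Pi.smul_apply, emb_apply, smul_eq_mul, mul_left_comm _ (Λ.w τ)]
  rw [← Finset.mul_sum]
  refine Eq.trans ?_ (congrArg (Λ.w τ * ·) hτ.symm)
  obtain rfl | h := eq_or_ne τ σ
  · simp [Λ.w_ne_zero]
  · simp [h, hφ.ne h]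

/-- `κ` bounds all the constants of the exponential lattice: the sizes of the integral basis and of
the frequencies, the constants of `Λ`, that of Siegel's lemma, and the coordinates of the standard
basis of `G → ℂ` in the basis given by the lattice. -/
structure IsHeightBound (κ : ℕ) : Prop where
  one_le : 1 ≤ κ
  basisHouse_le : basisHouse K ≤ κ
  house_ε_mul_le : ∀ σ, house (Λ.ε σ : K) * basisHouse K ≤ κ
  freq_le : (∑ σ, ‖Λ.w σ‖ * house (Λ.ε σ : K)) * basisHouse K ^ 2 ≤ κ
  den_le : Λ.den ≤ κ
  growth_le : Λ.growth ≤ κ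
  isSiegelConst : IsSiegelConst K κ
  exists_coord : ∃ b : (K ≃ₐ[ℚ] K) → Free.ChooseBasisIndex ℤ (𝓞 K) → ℂ,
    (∀ σ, Pi.basisFun ℂ _ σ = ∑ j, b σ j • Λ.emb (RingOfIntegers.basis K j)) ∧
      ∀ σ j, ‖b σ j‖ ≤ κ

open Filter in
lemma exists_isHeightBound : ∃ κ, Λ.IsHeightBound κ := by
  have hev (c : ℝ) : ∀ᶠ κ : ℕ in atTop, c ≤ κ :=
    tendsto_natCast_atTop_atTop.eventually_ge_atTop c
  obtain ⟨c, hc⟩ := exists_isSiegelConst K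
  obtain ⟨b, hb⟩ := Λ.exists_basisFun_eq_sum_emb
  refine Eventually.exists (f := atTop) ?_
  filter_upwards [eventually_ge_atTop 1, hev (basisHouse K),
    eventually_all.2 fun σ => hev (house (Λ.ε σ : K) * basisHouse K), hev _,
    eventually_ge_atTop Λ.den, eventually_ge_atTop Λ.growth, hev c,
    eventually_all.2 fun σ => eventually_all.2 fun j => hev ‖b σ j‖] with κ h₁ h₂ h₃ h₄ h₅ h₆ h₇ h₈
  exact ⟨h₁, h₂, h₃, h₄, h₅, h₆, hc.mono h₇, b, hb, h₈⟩

/-- The auxiliary function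
`z ↦ ∑ (a, l), ξ (a, l) * (z 1) ^ a * exp (freq (boxPoint l) z)`. -/
noncomputable def auxFun {L : ℕ} (ξ : Fin L × Box K L → 𝓞 K) :
    ExpPoly ((K ≃ₐ[ℚ] K) → ℂ) (Box K L) where
  lin := LinearMap.proj 1
  coeff l := ∑ a, ι (ξ (a, l)) • X ^ (a : ℕ)
  freq l := Λ.freq (boxPoint l)

/-- The coefficient in `𝓞 K` of the unknown `ξ (a, l)`, where `y = boxPoint l`, in the derivative
of order `s` of the auxiliary function at the lattice point `x`, multiplied by `den ^ b`. -/
noncomputable def entry (b : ℕ) (s : Multiset (K ≃ₐ[ℚ] K)) (x : 𝓞 K) (a : ℕ) (y : 𝓞 K) : 𝓞 K :=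
  eval x (twistedDeriv (s.map fun σ => (Pi.basisFun (𝓞 K) _ σ 1, Λ.ε σ * σ • y)) (X ^ a)) *
    Λ.value b (x * y)

lemma map_entry {b : ℕ} (s : Multiset (K ≃ₐ[ℚ] K)) {x y : 𝓞 K} (a : ℕ)
    (hb : house ((x * y : 𝓞 K) : K) ≤ b) :
    ι (Λ.entry b s x a y) = Λ.den ^ b * (eval (ι x) (twistedDeriv
      ((s.map (Pi.basisFun ℂ _)).map fun v => (v 1, Λ.freq y v)) (X ^ a)) *
        exp (Λ.freq y (Λ.emb x))) := by
  classical
  have hmap := map_eval_twistedDeriv_X_pow (ι.comp (algebraMap (𝓞 K) K))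
    (s.map fun σ => (Pi.basisFun (𝓞 K) _ σ 1, Λ.ε σ * σ • y)) a x
  have hs : (s.map fun σ => (Pi.basisFun (𝓞 K) _ σ 1, Λ.ε σ * σ • y)).map
      (Prod.map (ι.comp (algebraMap (𝓞 K) K)) (ι.comp (algebraMap (𝓞 K) K))) =
      (s.map (Pi.basisFun ℂ _)).map fun v => (v 1, Λ.freq y v) := by
    rw [Multiset.map_map, Multiset.map_map]
    refine Multiset.map_congr rfl fun σ _ => Prod.ext ?_ (Λ.freq_basisFun y σ).symm
    simp [Pi.single_apply, apply_ite]
  rw [hs] at hmap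
  rw [entry, RingOfIntegers.coe_eq_algebraMap, map_mul, map_mul, freq_emb, mul_left_comm]
  exact congrArg₂ (· * ·) hmap (Λ.value_eq b _ hb)

lemma den_pow_mul_deriv_auxFun {L b : ℕ} (ξ : Fin L × Box K L → 𝓞 K)
    (s : Multiset (K ≃ₐ[ℚ] K)) {x : 𝓞 K}
    (hb : ∀ l : Box K L, house ((x * boxPoint l : 𝓞 K) : K) ≤ b) :
    Λ.den ^ b * (Λ.auxFun ξ).deriv (s.map (Pi.basisFun ℂ _)) (Λ.emb x) =
      ι (∑ p, Λ.entry b s x p.1 (boxPoint p.2) * ξ p : 𝓞 K) := by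
  simp only [map_sum, map_mul, Fintype.sum_prod_type_right, ExpPoly.deriv, Finset.mul_sum]
  refine Finset.sum_congr rfl fun l _ => ?_
  simp only [auxFun, map_sum, map_smul, eval_finsetSum, eval_smul, smul_eq_mul, Finset.sum_mul,
    Finset.mul_sum, LinearMap.proj_apply, emb_apply_one]
  refine Finset.sum_congr rfl fun a _ => ?_
  rw [← RingOfIntegers.coe_eq_algebraMap, Λ.map_entry s a (hb l)]
  ring

end ExpLattice

namespace ExpLattice

variable {K : Type u} [Field K] [NumberField K] {ι : K →+* ℂ} {Λ : ExpLattice ι}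
  {κ M N L T : ℕ}

namespace IsHeightBound

lemma house_boxPoint_le_mul (hκ : Λ.IsHeightBound κ) (m : Box K N) :
    house (boxPoint m : K) ≤ κ * N :=
  (house_boxPoint_le m).trans (by have := hκ.basisHouse_le; gcongr)

lemma house_boxPoint_mul_boxPoint_le (hκ : Λ.IsHeightBound κ) (m : Box K N) (l : Box K L) :
    house ((boxPoint m * boxPoint l : 𝓞 K) : K) ≤ (κ ^ 2 * N * L : ℕ) :=
  calc house ((boxPoint m * boxPoint l : 𝓞 K) : K)
      ≤ house (boxPoint m : K) * house (boxPoint l : K) := house_mul_le _ _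
    _ ≤ (κ * N) * (κ * L) := mul_le_mul (hκ.house_boxPoint_le_mul m) (hκ.house_boxPoint_le_mul l)
        (house_nonneg _) (by positivity)
    _ = (κ ^ 2 * N * L : ℕ) := by push_cast; ring

lemma house_ε_mul_smul_boxPoint_le (hκ : Λ.IsHeightBound κ) (σ : K ≃ₐ[ℚ] K) (l : Box K L) :
    house ((Λ.ε σ * σ • boxPoint l : 𝓞 K) : K) ≤ κ * L :=
  calc house ((Λ.ε σ * σ • boxPoint l : 𝓞 K) : K)
      ≤ house (Λ.ε σ : K) * house ((σ • boxPoint l : 𝓞 K) : K) := house_mul_le _ _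
    _ ≤ house (Λ.ε σ : K) * (basisHouse K * L) := mul_le_mul_of_nonneg_left
        ((house_algEquiv_apply_le σ _).trans (house_boxPoint_le l)) (house_nonneg _)
    _ ≤ κ * L := by
        rw [← mul_assoc]
        have := hκ.house_ε_mul_le σ
        gcongr

lemma house_entry_le (hκ : Λ.IsHeightBound κ) (hN : 0 < N) {a : ℕ} (ha : a ≤ L)
    (s : Multiset (K ≃ₐ[ℚ] K)) (m : Box K N) (l : Box K L) :
    house (Λ.entry (κ ^ 2 * N * L) s (boxPoint m) a (boxPoint l) : K) ≤
      (2 * κ * L) ^ Multiset.card s * (κ * N) ^ a * κ ^ (κ ^ 2 * N * L) := by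
  classical
  have hκ1 : (1 : ℝ) ≤ κ := by exact_mod_cast hκ.one_le
  rw [entry, RingOfIntegers.coe_eq_algebraMap, map_mul, map_eval_twistedDeriv_X_pow]
  refine (house_mul_le _ _).trans (mul_le_mul ?_ ((Λ.house_value_le _ _
    (hκ.house_boxPoint_mul_boxPoint_le m l)).trans ?_) (house_nonneg _) (by positivity))
  · rw [← Multiset.card_map (fun σ => (Pi.basisFun (𝓞 K) _ σ 1, Λ.ε σ * σ • boxPoint l)) s,
      ← Multiset.card_map (Prod.map _ _)]
    refine house_eval_twistedDeriv_X_pow_le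
      (one_le_mul_of_one_le_of_one_le hκ1 (by exact_mod_cast hN)) ?_ (hκ.house_boxPoint_le_mul m)
    simp only [Multiset.mem_map, exists_exists_and_eq_and, forall_exists_index, and_imp,
      forall_apply_eq_imp_iff₂, Prod.map_apply]
    intro σ _
    have h1 : house (algebraMap (𝓞 K) K (Pi.basisFun (𝓞 K) _ σ 1)) ≤ 1 := by
      rw [Pi.basisFun_apply, Pi.single_apply]
      split_ifs
      · simpa using (house_intCast (K := K) 1).le
      · simp [house]
    have haL : (a : ℝ) ≤ κ * L := by
      exact_mod_cast ha.trans (Nat.le_mul_of_pos_left L hκ.one_le)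
    calc house (algebraMap (𝓞 K) K (Pi.basisFun (𝓞 K) _ σ 1)) * a +
          house ((Λ.ε σ * σ • boxPoint l : 𝓞 K) : K)
        ≤ 1 * (κ * L) + κ * L := by
          gcongr
          exact hκ.house_ε_mul_smul_boxPoint_le σ l
      _ = 2 * κ * L := by ring
  · gcongr
    exact_mod_cast hκ.growth_le

lemma house_entry_le_pow (hκ : Λ.IsHeightBound κ) (hp : IsAdmissible (finrank ℚ K) κ M N L T)
    {a n : ℕ} (ha : a ≤ L) (hn : T ≤ n) (s : Multiset (K ≃ₐ[ℚ] K)) (m : Box K N) (l : Box K L) :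
    house (Λ.entry (κ ^ 2 * N * L) s (boxPoint m) a (boxPoint l) : K) ≤
      n ^ (Multiset.card s + 2 * n) := by
  have hn1 : 1 ≤ n := by have := hp.two_le; omega
  have hκn : κ ≤ n :=
    (Nat.le_mul_of_pos_left κ Module.finrank_pos).trans (hp.deg_mul_le.trans hn)
  refine (hκ.house_entry_le hp.side_pos ha s m l).trans ?_
  calc (2 * κ * L : ℝ) ^ Multiset.card s * (κ * N) ^ a * κ ^ (κ ^ 2 * N * L)
      ≤ n ^ Multiset.card s * n ^ n * n ^ n := by
        norm_cast
        gcongr ?_ * ?_ * ?_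
        · exact Nat.pow_le_pow_left (hp.two_mul_freq_le.trans hn) _
        · exact pow_le_pow (hp.mul_side_le.trans hn) hn1 ((ha.trans hp.freq_le).trans hn)
        · exact pow_le_pow hκn hn1 (hp.sq_mul_le.trans hn)
    _ = n ^ (Multiset.card s + 2 * n) := by ring

end IsHeightBound

end ExpLattice

lemma exists_multiset_family (G : Type*) [Fintype G] (T : ℕ) :
    ∃ S : (G → Fin T) → Multiset G, (∀ k, Multiset.card (S k) ≤ Fintype.card G * T) ∧
      ∀ s : Multiset G, Multiset.card s < T → ∃ k, S k = s := by
  classical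
  refine ⟨fun k => Finsupp.toMultiset (Finsupp.equivFunOnFinite.symm fun σ => (k σ : ℕ)),
    fun k => ?_, fun s hs =>
      ⟨fun σ => ⟨s.count σ, (Multiset.count_le_card σ s).trans_lt hs⟩, Multiset.ext.2 fun σ => ?_⟩⟩
  · rw [Finsupp.card_toMultiset, Finsupp.sum_fintype _ _ fun _ => rfl, ← Finset.card_univ,
      ← smul_eq_mul]
    exact Finset.sum_le_card_nsmul _ _ T fun σ _ => (k σ).2.le
  · simp

namespace ExpLattice

variable {K : Type u} [Field K] [NumberField K] {ι : K →+* ℂ} {Λ : ExpLattice ι}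
  {κ M N L T : ℕ}

variable (K N) in
lemma card_box : Fintype.card (Box K N) = N ^ finrank ℚ K := by
  rw [← RingOfIntegers.rank K, Module.finrank_eq_card_chooseBasisIndex, Fintype.card_fun,
    Fintype.card_fin]

lemma card_unknowns_le (hp : IsAdmissible (finrank ℚ K) κ M N L T) {n : ℕ} (hn : T ≤ n) :
    Fintype.card (Fin L × Box K L) ≤ n ^ ((finrank ℚ K + 1) * n) := by
  have hn1 : 1 ≤ n := by have := hp.two_le; omega
  rw [Fintype.card_prod, Fintype.card_fin, card_box, ← pow_succ']
  exact pow_le_pow (hp.freq_le.trans hn) hn1 (Nat.le_mul_of_pos_right _ hn1)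

lemma IsHeightBound.exists_auxFun [IsGalois ℚ K] (hκ : Λ.IsHeightBound κ)
    (hp : IsAdmissible (finrank ℚ K) κ M N L T) :
    ∃ ξ : Fin L × Box K L → 𝓞 K, ξ ≠ 0 ∧
      (∀ p, house (ξ p : K) ≤ T ^ ((2 * finrank ℚ K + 4) * T)) ∧
      ∀ s : Multiset (K ≃ₐ[ℚ] K), Multiset.card s < T → ∀ m : Box K N,
        (Λ.auxFun ξ).deriv (s.map (Pi.basisFun ℂ _)) (Λ.emb (boxPoint m)) = 0 := by
  classical
  set D := finrank ℚ K
  have hT : 1 ≤ T := one_le_two.trans hp.two_le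
  have hG : Fintype.card (K ≃ₐ[ℚ] K) = D := by
    rw [← Nat.card_eq_fintype_card, IsGalois.card_aut_eq_finrank]
  obtain ⟨S, hS_card, hS⟩ := exists_multiset_family (K ≃ₐ[ℚ] K) T
  rw [hG] at hS_card
  obtain ⟨ξ, hξ, haξ, hle⟩ := hκ.isSiegelConst (((K ≃ₐ[ℚ] K) → Fin T) × Box K N)
    (Fin L × Box K L) (Matrix.of fun k p =>
      Λ.entry (κ ^ 2 * N * L) (S k.1) (boxPoint k.2) p.1 (boxPoint p.2)) (T ^ (D * T + 2 * T))
    (one_le_pow₀ (by exact_mod_cast hT))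
    (fun k p => (hκ.house_entry_le_pow hp p.1.2.le le_rfl _ _ _).trans
      (pow_le_pow_right₀ (by exact_mod_cast hT) (by gcongr; exact hS_card _)))
    (by
      rw [Fintype.card_prod, Fintype.card_prod, Fintype.card_fun, card_box, card_box,
        Fintype.card_fin, Fintype.card_fin, hG]
      exact hp.card_le)
    (by
      have := hp.freq_pos
      rw [Fintype.card_prod, card_box, Fintype.card_fin]
      positivity)
  refine ⟨ξ, hξ, fun p => (hle p).trans ?_, fun s hs m => ?_⟩
  · have hcard := card_unknowns_le hp le_rfl
    have hκT : κ ≤ T := (Nat.le_mul_of_pos_left κ Module.finrank_pos).trans hp.deg_mul_le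
    calc (κ : ℝ) * (Fintype.card (Fin L × Box K L) * T ^ (D * T + 2 * T))
        ≤ T ^ T * (T ^ ((D + 1) * T) * T ^ (D * T + 2 * T)) := by
          norm_cast
          gcongr
          exact hκT.trans (Nat.le_self_pow (by omega) T)
      _ = T ^ ((2 * D + 4) * T) := by ring
  · obtain ⟨k, rfl⟩ := hS s hs
    have hrow : ∑ p, Λ.entry (κ ^ 2 * N * L) (S k) (boxPoint m) p.1 (boxPoint p.2) * ξ p = 0 :=
      congrFun haξ (k, m)
    have hden := Λ.den_pow_mul_deriv_auxFun ξ (S k)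
      fun l => hκ.house_boxPoint_mul_boxPoint_le m l
    rw [hrow, RingOfIntegers.coe_eq_algebraMap, map_zero, map_zero] at hden
    exact (mul_eq_zero.1 hden).resolve_left (pow_ne_zero _ (by exact_mod_cast Λ.den_ne_zero))

end ExpLattice

namespace ExpLattice.IsHeightBound

variable {K : Type u} [Field K] [NumberField K] {ι : K →+* ℂ} {Λ : ExpLattice ι}
  {κ M N L T n : ℕ} {ξ : Fin L × Box K L → 𝓞 K}

lemma house_sum_entry_mul_le (hκ : Λ.IsHeightBound κ)
    (hp : IsAdmissible (finrank ℚ K) κ M N L T) (hn : T ≤ n)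
    (hξ : ∀ p, house (ξ p : K) ≤ n ^ ((2 * finrank ℚ K + 4) * n)) {s : Multiset (K ≃ₐ[ℚ] K)}
    (hs : Multiset.card s ≤ n) (m : Box K N) :
    house ((∑ p, Λ.entry (κ ^ 2 * N * L) s (boxPoint m) p.1 (boxPoint p.2) * ξ p : 𝓞 K) : K) ≤
      n ^ ((3 * finrank ℚ K + 8) * n) := by
  have hn1 : (1 : ℝ) ≤ n := by exact_mod_cast (one_le_two.trans hp.two_le).trans hn
  set D := finrank ℚ K
  rw [RingOfIntegers.coe_eq_algebraMap, map_sum]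
  calc house (∑ p, algebraMap (𝓞 K) K
        (Λ.entry (κ ^ 2 * N * L) s (boxPoint m) p.1 (boxPoint p.2) * ξ p))
      ≤ ∑ _p : Fin L × Box K L, (n : ℝ) ^ (3 * n) * n ^ ((2 * D + 4) * n) := by
        refine (house_sum_le_sum_house _ _).trans (Finset.sum_le_sum fun p _ => ?_)
        rw [map_mul]
        refine (house_mul_le _ _).trans (mul_le_mul ?_ (hξ p) (house_nonneg _) (by positivity))
        exact (hκ.house_entry_le_pow hp p.1.2.le hn s m p.2).trans
          (pow_le_pow_right₀ hn1 (by omega))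
    _ = Fintype.card (Fin L × Box K L) * (n ^ (3 * n) * n ^ ((2 * D + 4) * n)) := by
        rw [Finset.sum_const, Finset.card_univ, nsmul_eq_mul]
    _ ≤ n ^ ((D + 1) * n) * (n ^ (3 * n) * n ^ ((2 * D + 4) * n)) := by
        have hcard : (Fintype.card (Fin L × Box K L) : ℝ) ≤ n ^ ((D + 1) * n) := by
          exact_mod_cast card_unknowns_le hp hn
        gcongr
    _ = n ^ ((3 * D + 8) * n) := by ring

lemma norm_map_basis_le (hκ : Λ.IsHeightBound κ) (j : Free.ChooseBasisIndex ℤ (𝓞 K)) :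
    ‖ι (RingOfIntegers.basis K j)‖ ≤ κ :=
  (norm_embedding_le_house _ ι).trans ((house_basis_le j).trans hκ.basisHouse_le)

lemma norm_freq_boxPoint_le (hκ : Λ.IsHeightBound κ) {x : 𝓞 K} {c : ℝ} (hc : 0 ≤ c)
    (hx : house (x : K) ≤ basisHouse K * c) (l : Box K L) :
    ‖Λ.freq (boxPoint l) (Λ.emb x)‖ ≤ κ * c * L := by
  have hw : 0 ≤ ∑ σ, ‖Λ.w σ‖ * house (Λ.ε σ : K) :=
    Finset.sum_nonneg fun σ _ => mul_nonneg (norm_nonneg _) (house_nonneg _)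
  calc ‖Λ.freq (boxPoint l) (Λ.emb x)‖
      ≤ (∑ σ, ‖Λ.w σ‖ * house (Λ.ε σ : K)) * (house (x : K) * house (boxPoint l : K)) :=
        Λ.norm_freq_emb_le _ _
    _ ≤ (∑ σ, ‖Λ.w σ‖ * house (Λ.ε σ : K)) * ((basisHouse K * c) * (basisHouse K * L)) := by
        have := basisHouse_nonneg K
        exact mul_le_mul_of_nonneg_left
          (mul_le_mul hx (house_boxPoint_le l) (house_nonneg _) (by positivity)) hw
    _ = (∑ σ, ‖Λ.w σ‖ * house (Λ.ε σ : K)) * basisHouse K ^ 2 * c * L := by ring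
    _ ≤ κ * c * L := by
        have := hκ.freq_le
        gcongr

lemma norm_freq_basis_le (hκ : Λ.IsHeightBound κ) (j : Free.ChooseBasisIndex ℤ (𝓞 K))
    (l : Box K L) : ‖Λ.freq (boxPoint l) (Λ.emb (RingOfIntegers.basis K j))‖ ≤ κ * L := by
  simpa using hκ.norm_freq_boxPoint_le zero_le_one (by simpa using house_basis_le j) l

lemma norm_eval_twistedDeriv_coeff_auxFun_le (hκ : Λ.IsHeightBound κ) {B Z : ℝ} (hZ : 1 ≤ Z)
    (hξ : ∀ p, house (ξ p : K) ≤ B) (s : Multiset (Free.ChooseBasisIndex ℤ (𝓞 K))) {z : ℂ}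
    (hz : ‖z‖ ≤ Z) (l : Box K L) :
    ‖eval z (twistedDeriv ((s.map fun j => Λ.emb (RingOfIntegers.basis K j)).map
      fun v => ((Λ.auxFun ξ).lin v, (Λ.auxFun ξ).freq l v)) ((Λ.auxFun ξ).coeff l))‖ ≤
      L * (B * ((2 * κ * L) ^ Multiset.card s * Z ^ L)) := by
  simp only [auxFun, map_sum, map_smul, eval_finsetSum, eval_smul, smul_eq_mul]
  refine (norm_sum_le_of_le Finset.univ fun a _ => ?_).trans_eq (by
    rw [Finset.sum_const, Finset.card_fin, nsmul_eq_mul])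
  rw [norm_mul]
  refine mul_le_mul ((norm_embedding_le_house _ ι).trans (hξ _)) ?_ (norm_nonneg _)
    ((house_nonneg _).trans (hξ (a, l)))
  have hZa : Z ^ (a : ℕ) ≤ Z ^ L := pow_le_pow_right₀ hZ a.2.le
  refine (norm_eval_twistedDeriv_X_pow_le (B := 2 * κ * L) hZ ?_ hz).trans ?_
  · simp only [Multiset.mem_map, exists_exists_and_eq_and, forall_exists_index, and_imp,
      forall_apply_eq_imp_iff₂, LinearMap.proj_apply, emb_apply_one]
    intro j _
    have haL : (a : ℝ) ≤ L := by exact_mod_cast a.2.le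
    calc _ ≤ (κ * L + κ * L : ℝ) := add_le_add
          (mul_le_mul (hκ.norm_map_basis_le j) haL (by positivity) (by positivity))
          (hκ.norm_freq_basis_le j l)
      _ = 2 * κ * (L : ℝ) := by ring
  · rw [Multiset.card_map, Multiset.card_map]
    gcongr

lemma norm_lin_auxFun_line_le (hκ : Λ.IsHeightBound κ) (m : Box K N)
    (j : Free.ChooseBasisIndex ℤ (𝓞 K)) (t : ℂ) :
    ‖(Λ.auxFun ξ).lin (Λ.emb (boxPoint m) + t • Λ.emb (RingOfIntegers.basis K j))‖ ≤
      κ * (N + ‖t‖) := by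
  rw [map_add, map_smul, mul_add, mul_comm _ ‖t‖]
  simp only [auxFun, LinearMap.proj_apply, emb_apply_one, smul_eq_mul]
  refine norm_add_le_of_le ((norm_embedding_le_house _ ι).trans (hκ.house_boxPoint_le_mul m)) ?_
  rw [norm_mul]
  gcongr
  exact hκ.norm_map_basis_le j

lemma norm_freq_auxFun_line_le (hκ : Λ.IsHeightBound κ) (m : Box K N)
    (j : Free.ChooseBasisIndex ℤ (𝓞 K)) (t : ℂ) (l : Box K L) :
    ‖(Λ.auxFun ξ).freq l (Λ.emb (boxPoint m) + t • Λ.emb (RingOfIntegers.basis K j))‖ ≤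
      κ * L * (N + ‖t‖) := by
  rw [map_add, map_smul, mul_add, mul_right_comm, mul_comm _ ‖t‖]
  refine norm_add_le_of_le
    ((hκ.norm_freq_boxPoint_le N.cast_nonneg (house_boxPoint_le m) l).trans_eq (by ring)) ?_
  rw [norm_smul]
  gcongr
  exact hκ.norm_freq_basis_le j l

lemma norm_deriv_auxFun_le (hκ : Λ.IsHeightBound κ)
    (hp : IsAdmissible (finrank ℚ K) κ M N L T) (hn : T ≤ n)
    (hξ : ∀ p, house (ξ p : K) ≤ n ^ ((2 * finrank ℚ K + 4) * n)) {R : ℕ}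
    (hRn : κ * (N + R) ≤ n) (hexp : Real.exp (κ * L * (N + R)) ≤ n ^ n)
    {s : Multiset (Free.ChooseBasisIndex ℤ (𝓞 K))} (hs : Multiset.card s ≤ n) (m : Box K N)
    (j : Free.ChooseBasisIndex ℤ (𝓞 K)) {t : ℂ} (ht : ‖t‖ = R) :
    ‖(Λ.auxFun ξ).deriv (s.map fun j => Λ.emb (RingOfIntegers.basis K j))
      (Λ.emb (boxPoint m) + t • Λ.emb (RingOfIntegers.basis K j))‖ ≤
      n ^ ((3 * finrank ℚ K + 8) * n) := by
  have hn1 : 1 ≤ n := (one_le_two.trans hp.two_le).trans hn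
  have hZ : 1 ≤ κ * (N + R) := Nat.mul_pos hκ.one_le (Nat.add_pos_left hp.side_pos R)
  set D := finrank ℚ K
  refine ((Λ.auxFun ξ).norm_deriv_le (hκ.norm_eval_twistedDeriv_coeff_auxFun_le
    (by rw [ht]; exact_mod_cast hZ) hξ s (hκ.norm_lin_auxFun_line_le m j t))
    (hκ.norm_freq_auxFun_line_le m j t)).trans ?_
  rw [ht]
  calc (Fintype.card (Box K L) : ℝ) * ((L * (n ^ ((2 * D + 4) * n) *
        ((2 * κ * L) ^ Multiset.card s * (κ * (N + R)) ^ L))) * Real.exp (κ * L * (N + R)))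
      ≤ Fintype.card (Box K L) * ((L * (n ^ ((2 * D + 4) * n) * (n ^ n * n ^ n))) * n ^ n) := by
        have hL : L ≤ n := hp.freq_le.trans hn
        have hκL : 2 * κ * L ≤ n := hp.two_mul_freq_le.trans hn
        have hpow : (2 * κ * L : ℝ) ^ Multiset.card s ≤ n ^ n := by
          exact_mod_cast pow_le_pow hκL hn1 hs
        have hpow' : (κ * (N + R) : ℝ) ^ L ≤ n ^ n := by
          exact_mod_cast pow_le_pow hRn hn1 hL
        gcongr
    _ = Fintype.card (Fin L × Box K L) * (n ^ (2 * D * n + 7 * n)) := by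
        rw [Fintype.card_prod, Fintype.card_fin]
        push_cast
        ring
    _ ≤ n ^ ((D + 1) * n) * (n ^ (2 * D * n + 7 * n)) := by
        have hcard : (Fintype.card (Fin L × Box K L) : ℝ) ≤ n ^ ((D + 1) * n) := by
          exact_mod_cast card_unknowns_le hp hn
        gcongr
    _ = n ^ ((3 * D + 8) * n) := by ring

end ExpLattice.IsHeightBound

lemma exists_finset_sub {N : ℕ} (m : Fin N) : ∃ Z : Finset ℂ, Z.card = N ∧
    ∀ t ∈ Z, ‖t‖ ≤ N ∧ ∃ k : Fin N, (k : ℂ) - m = t := by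
  classical
  refine ⟨Finset.univ.image fun k : Fin N => (k : ℂ) - m, ?_, fun t ht => ?_⟩
  · rw [Finset.card_image_of_injective _ fun k k' h => by simpa [Fin.val_inj] using h,
      Finset.card_fin]
  · obtain ⟨k, -, rfl⟩ := Finset.mem_image.1 ht
    have hk : |(k : ℤ) - m| ≤ N := by rw [abs_le]; omega
    exact ⟨by simpa using (Complex.norm_intCast ((k : ℤ) - m)).trans_le (by exact_mod_cast hk),
      k, rfl⟩

lemma pow_mul_le_one_div_pow {D M N R r n : ℕ} (hn : 1 ≤ n) (hNR : N ≤ R)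
    (hgain : ((N + 1 : ℝ) / (R - N)) ^ N ≤ (1 / n) ^ (D * M)) (hnr : n ≤ D * r) :
    ((N + 1 : ℝ) / (R - N)) ^ (r * N) ≤ (1 / n) ^ (M * n) := by
  have hn1 : (1 : ℝ) ≤ n := by exact_mod_cast hn
  have hRN : (0 : ℝ) ≤ R - N := sub_nonneg.2 (by exact_mod_cast hNR)
  calc ((N + 1 : ℝ) / (R - N)) ^ (r * N) = (((N + 1 : ℝ) / (R - N)) ^ N) ^ r := by
        rw [← pow_mul, mul_comm]
    _ ≤ ((1 / n) ^ (D * M)) ^ r := pow_le_pow_left₀ (by positivity) hgain r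
    _ = (1 / n) ^ (M * (D * r)) := by rw [← pow_mul]; ring_nf
    _ ≤ (1 / n) ^ (M * n) := pow_le_pow_of_le_one (by positivity)
        (div_le_one_of_le₀ hn1 (by positivity)) (by gcongr)

namespace ExpLattice

variable {K : Type u} [Field K] [NumberField K] {ι : K →+* ℂ} {Λ : ExpLattice ι}
  {κ M N L T n : ℕ} {ξ : Fin L × Box K L → 𝓞 K}

lemma exists_deriv_auxFun_ne_zero (hε : Λ.ε ≠ 0) (hξ : ξ ≠ 0) (hN : 0 < N) :
    ∃ (s : Multiset (K ≃ₐ[ℚ] K)) (m : Box K N),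
      (Λ.auxFun ξ).deriv (s.map (Pi.basisFun ℂ _)) (Λ.emb (boxPoint m)) ≠ 0 := by
  by_contra! hzero
  have hm : boxPoint (fun _ => ⟨0, hN⟩ : Box K N) = 0 := by simp [boxPoint_eq_sum]
  have hlin : (Λ.auxFun ξ).lin ≠ 0 := fun h => by
    simpa [auxFun] using LinearMap.congr_fun h 1
  have hcoeff : (Λ.auxFun ξ).coeff = 0 := by
    refine (Λ.auxFun ξ).coeff_eq_zero hlin ((Λ.freq_injective hε).comp (boxPoint_injective L))
      fun s => ?_
    refine (Λ.auxFun ξ).deriv_eq_zero_of_span_eq_top (Pi.basisFun ℂ _).span_eq (fun u _ => ?_) rfl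
    simpa [hm] using hzero u fun _ => ⟨0, hN⟩
  refine hξ (funext fun p => RingOfIntegers.coe_injective (ι.injective ?_))
  have hp := congrArg (fun P => Polynomial.coeff P p.1) (congrFun hcoeff p.2)
  simpa [auxFun, coeff_X_pow, Fin.val_inj, finsetSum_coeff] using hp

variable (K) in
lemma card_basisIndex : Fintype.card (Free.ChooseBasisIndex ℤ (𝓞 K)) = finrank ℚ K := by
  rw [← Module.finrank_eq_card_chooseBasisIndex, RingOfIntegers.rank]

namespace IsHeightBound

-- Schwarz' lemma is applied in the directions of the lattice, which contain many of the zeros.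
lemma norm_deriv_auxFun_le_of_forall_lt (hκ : Λ.IsHeightBound κ)
    (hp : IsAdmissible (finrank ℚ K) κ (finrank ℚ K * M) N L T) (hn : T ≤ n)
    (hξ : ∀ p, house (ξ p : K) ≤ n ^ ((2 * finrank ℚ K + 4) * n))
    (hzero : ∀ s : Multiset (K ≃ₐ[ℚ] K), Multiset.card s < n → ∀ m : Box K N,
      (Λ.auxFun ξ).deriv (s.map (Pi.basisFun ℂ _)) (Λ.emb (boxPoint m)) = 0)
    {s : Multiset (Free.ChooseBasisIndex ℤ (𝓞 K))} (hs : Multiset.card s = n) (m : Box K N) :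
    ‖(Λ.auxFun ξ).deriv (s.map fun j => Λ.emb (RingOfIntegers.basis K j))
      (Λ.emb (boxPoint m))‖ ≤
      n ^ n * ((1 / n) ^ (M * n) * n ^ ((3 * finrank ℚ K + 8) * n)) := by
  classical
  have hn1 : 1 ≤ n := (one_le_two.trans hp.two_le).trans hn
  have : Nonempty (Free.ChooseBasisIndex ℤ (𝓞 K)) :=
    Fintype.card_pos_iff.1 (card_basisIndex K ▸ Module.finrank_pos)
  obtain ⟨R, hNR, hRn, hexp, hgain⟩ := hp.exists_radius n hn
  choose Z hZ_card hZ using fun j => exists_finset_sub (m j)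
  obtain ⟨r, hnr, hrn, hle⟩ := (Λ.auxFun ξ).exists_norm_deriv_le_of_zeros
    (x := fun j => Λ.emb (RingOfIntegers.basis K j)) (s := s) (z := Λ.emb (boxPoint m))
    (R := R) (B := n ^ ((3 * finrank ℚ K + 8) * n)) hZ_card N.cast_nonneg
    (fun j t ht => (hZ j t ht).1) (by exact_mod_cast hNR)
    (fun j t ht s' hs' => by
      obtain ⟨k, rfl⟩ := (hZ j t ht).2
      rw [emb_boxPoint_add]
      exact (Λ.auxFun ξ).deriv_eq_zero_of_span_eq_top (Pi.basisFun ℂ _).span_eq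
        (fun u hu => hzero u (by simpa [hu, ← hs] using hs') _) (Multiset.card_map _ _))
    (fun j s' hs' t ht => hκ.norm_deriv_auxFun_le hp hn hξ hRn hexp (hs'.trans hs.le) m j ht)
  rw [hs] at hnr hrn
  rw [card_basisIndex] at hnr
  have hfact : (r.factorial : ℝ) ≤ n ^ n := by
    exact_mod_cast (Nat.factorial_le hrn).trans (Nat.factorial_le_pow n)
  have hratio := pow_mul_le_one_div_pow hn1 (by omega) hgain hnr
  have hRN : (0 : ℝ) ≤ R - N := sub_nonneg.2 (by exact_mod_cast (Nat.le_succ N).trans hNR)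
  exact hle.trans (by gcongr)

lemma norm_sum_entry_mul_le_of_forall_lt (hκ : Λ.IsHeightBound κ)
    (hp : IsAdmissible (finrank ℚ K) κ (finrank ℚ K * M) N L T) (hn : T ≤ n)
    (hξ : ∀ p, house (ξ p : K) ≤ n ^ ((2 * finrank ℚ K + 4) * n))
    (hzero : ∀ s : Multiset (K ≃ₐ[ℚ] K), Multiset.card s < n → ∀ m : Box K N,
      (Λ.auxFun ξ).deriv (s.map (Pi.basisFun ℂ _)) (Λ.emb (boxPoint m)) = 0)
    {s : Multiset (K ≃ₐ[ℚ] K)} (hs : Multiset.card s = n) (m : Box K N) :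
    ‖ι (∑ p, Λ.entry (κ ^ 2 * N * L) s (boxPoint m) p.1 (boxPoint p.2) * ξ p : 𝓞 K)‖ ≤
      n ^ ((3 * finrank ℚ K + 11) * n) * (1 / n) ^ (M * n) := by
  have hn1 : 1 ≤ n := (one_le_two.trans hp.two_le).trans hn
  have hκn : finrank ℚ K * κ ≤ n := hp.deg_mul_le.trans hn
  have hden : (Λ.den : ℝ) ^ (κ ^ 2 * N * L) ≤ n ^ n := by
    exact_mod_cast pow_le_pow (hκ.den_le.trans ((Nat.le_mul_of_pos_left κ
      Module.finrank_pos).trans hκn)) hn1 (hp.sq_mul_le.trans hn)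
  obtain ⟨b, hb, hbκ⟩ := hκ.exists_coord
  have hderiv := (Λ.auxFun ξ).norm_deriv_map_le hb hbκ
    (fun u hu => hκ.norm_deriv_auxFun_le_of_forall_lt hp hn hξ hzero hu m) hs
  rw [← Λ.den_pow_mul_deriv_auxFun ξ s fun l => hκ.house_boxPoint_mul_boxPoint_le m l, norm_mul,
    norm_pow, Complex.norm_natCast]
  rw [card_basisIndex] at hderiv
  set D := finrank ℚ K
  calc _ ≤ (n : ℝ) ^ n * ((D * κ) ^ n *
        (n ^ n * ((1 / n) ^ (M * n) * n ^ ((3 * D + 8) * n)))) := by gcongr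
    _ ≤ n ^ n * (n ^ n * (n ^ n * ((1 / n) ^ (M * n) * n ^ ((3 * D + 8) * n)))) := by
        have : (D * κ : ℝ) ≤ n := by exact_mod_cast hκn
        gcongr
    _ = n ^ ((3 * D + 11) * n) * (1 / n) ^ (M * n) := by ring

end IsHeightBound

lemma pow_mul_one_div_pow_lt_one {D e n : ℕ} (hD : 0 < D) (hn : 2 ≤ n) :
    (n : ℝ) ^ ((e + 3) * n) * (1 / n) ^ ((e * D + 4) * n) * (n ^ (e * n)) ^ (D - 1) < 1 := by
  have hn1 : (1 : ℝ) < n := by exact_mod_cast hn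
  have hn0 : (n : ℝ) ≠ 0 := by positivity
  obtain ⟨D, rfl⟩ := Nat.exists_eq_add_one.2 hD
  calc (n : ℝ) ^ ((e + 3) * n) * (1 / n) ^ ((e * (D + 1) + 4) * n) * (n ^ (e * n)) ^ (D + 1 - 1)
      = (n * (1 / n)) ^ ((e * (D + 1) + 3) * n) * (1 / n) ^ n := by
        rw [Nat.add_sub_cancel, mul_pow]
        ring
    _ = (1 / n) ^ n := by rw [mul_one_div_cancel hn0, one_pow, one_mul]
    _ < 1 := pow_lt_one₀ (by positivity) ((div_lt_one (by positivity)).2 hn1) (by omega)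

theorem ε_eq_zero [IsGalois ℚ K] (Λ : ExpLattice ι) : Λ.ε = 0 := by
  classical
  by_contra hε
  obtain ⟨κ, hκ⟩ := Λ.exists_isHeightBound
  obtain ⟨N, L, T, hp⟩ := exists_isAdmissible (D := finrank ℚ K) (κ := κ)
    (M := finrank ℚ K * ((3 * finrank ℚ K + 8) * finrank ℚ K + 4)) Module.finrank_pos
    (Nat.mul_pos Module.finrank_pos (by omega))
  obtain ⟨ξ, hξ0, hξ, hzero⟩ := hκ.exists_auxFun hp
  have hex : ∃ (n : ℕ) (s : Multiset (K ≃ₐ[ℚ] K)), Multiset.card s = n ∧ ∃ m : Box K N,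
      (Λ.auxFun ξ).deriv (s.map (Pi.basisFun ℂ _)) (Λ.emb (boxPoint m)) ≠ 0 := by
    obtain ⟨s, m, h⟩ := exists_deriv_auxFun_ne_zero hε hξ0 hp.side_pos
    exact ⟨_, s, rfl, m, h⟩
  obtain ⟨s, hs, m, hne⟩ := Nat.find_spec hex
  have hlt (u : Multiset (K ≃ₐ[ℚ] K)) (hu : Multiset.card u < Nat.find hex) (m' : Box K N) :
      (Λ.auxFun ξ).deriv (u.map (Pi.basisFun ℂ _)) (Λ.emb (boxPoint m')) = 0 :=
    not_not.1 fun h => Nat.find_min hex hu ⟨u, rfl, m', h⟩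
  generalize Nat.find hex = n at hs hlt
  have hn : T ≤ n := not_lt.1 fun h => hne (hzero s (hs.trans_lt h) m)
  have hξn (p) : house (ξ p : K) ≤ n ^ ((2 * finrank ℚ K + 4) * n) :=
    (hξ p).trans (by
      exact_mod_cast pow_le_pow hn ((one_le_two.trans hp.two_le).trans hn) (by gcongr))
  have hsum := eq_zero_of_norm_mul_pow_lt_one ι (hκ.house_sum_entry_mul_le hp hn hξn hs.le m)
    ((mul_le_mul_of_nonneg_right (hκ.norm_sum_entry_mul_le_of_forall_lt hp hn hξn hlt hs m)
      (by positivity)).trans_lt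
        (pow_mul_one_div_pow_lt_one Module.finrank_pos (hp.two_le.trans hn)))
  have hden := Λ.den_pow_mul_deriv_auxFun ξ s fun l => hκ.house_boxPoint_mul_boxPoint_le m l
  rw [hsum, RingOfIntegers.coe_eq_algebraMap, map_zero, map_zero] at hden
  exact hne ((mul_eq_zero.1 hden).resolve_left (pow_ne_zero _ (by exact_mod_cast Λ.den_ne_zero)))

end ExpLattice

section Denominators

variable {K : Type u} [Field K] [NumberField K]

lemma house_prod_univ_le {κ : Type*} [Fintype κ] (f : κ → K) :
    house (∏ i, f i) ≤ ∏ i, house (f i) := by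
  simp only [house, map_prod]
  exact Finset.norm_prod_le _ _

lemma exists_natCast_mul_eq_coe {κ : Type*} [Finite κ] (a : κ → K) :
    ∃ d : ℕ, d ≠ 0 ∧ ∃ p : κ → 𝓞 K, ∀ i, (p i : K) = d * a i := by
  classical
  have := Fintype.ofFinite κ
  obtain ⟨c, hc, hint⟩ := exists_integral_multiples ℤ ℚ (Finset.univ.image a)
  have hint' (i : κ) : IsIntegral ℤ ((c.natAbs : K) * a i) := by
    have hci := hint _ (Finset.mem_image_of_mem a (Finset.mem_univ i))
    rw [← Int.cast_natCast, ← zsmul_eq_mul]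
    obtain h | h := Int.natAbs_eq c
    · rwa [← h]
    · rw [← neg_eq_iff_eq_neg.2 h, neg_smul]
      exact hci.neg
  exact ⟨c.natAbs, Int.natAbs_ne_zero.2 hc, fun i => ⟨_, hint' i⟩, fun i => rfl⟩

lemma exists_coe_eq_pow_mul_pow {a : K} {d H : ℕ} {p : 𝓞 K} (hp : (p : K) = d * a)
    (hd : d ≤ H) (hpH : house (p : K) ≤ H) {M r : ℕ} (hr : r ≤ M) :
    ∃ z : 𝓞 K, (z : K) = d ^ M * a ^ r ∧ house (z : K) ≤ H ^ M := by
  obtain ⟨k, rfl⟩ := Nat.exists_eq_add_of_le' hr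
  have hz : (((d : 𝓞 K) ^ k * p ^ r : 𝓞 K) : K) = ((d ^ k : ℕ) : K) * (p : K) ^ r := by
    simp
  refine ⟨(d : 𝓞 K) ^ k * p ^ r, ?_, ?_⟩
  · rw [hz, hp]
    push_cast
    ring
  · rw [hz, house_nat_mul, pow_add]
    push_cast
    have hp0 := house_nonneg (p : K)
    have hpr0 := house_nonneg ((p : K) ^ r)
    gcongr
    exact (house_pow_le (p : K) r).trans (by gcongr)

lemma exists_coe_eq_pow_mul_zpow {a : K} {d H : ℕ} {p q : 𝓞 K} (hp : (p : K) = d * a)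
    (hq : (q : K) = d * a⁻¹) (hd : d ≤ H) (hpH : house (p : K) ≤ H) (hqH : house (q : K) ≤ H)
    {M : ℕ} {t : ℤ} (ht : |t| ≤ M) :
    ∃ z : 𝓞 K, (z : K) = d ^ M * a ^ t ∧ house (z : K) ≤ H ^ M := by
  obtain ⟨r, rfl | rfl⟩ := t.eq_nat_or_neg
  · rw [zpow_natCast]
    exact exists_coe_eq_pow_mul_pow hp hd hpH (by simpa using ht)
  · rw [zpow_neg, zpow_natCast, ← inv_pow]
    exact exists_coe_eq_pow_mul_pow hq hd hqH (by simpa using ht)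

lemma exists_coe_eq_pow_mul_prod_zpow {κ : Type*} [Fintype κ] (a : κ → K) :
    ∃ d H : ℕ, d ≠ 0 ∧ ∀ (M : ℕ) (t : κ → ℤ), (∀ i, |t i| ≤ M) →
      ∃ z : 𝓞 K, (z : K) = d ^ M * ∏ i, a i ^ t i ∧ house (z : K) ≤ H ^ M := by
  obtain ⟨d, hd, p, hp⟩ := exists_natCast_mul_eq_coe (Sum.elim a a⁻¹)
  obtain ⟨H, hH⟩ := exists_nat_ge (d + ∑ s, house (p s : K))
  have hsum : 0 ≤ ∑ s, house (p s : K) := Finset.sum_nonneg fun _ _ => house_nonneg _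
  have hdH : d ≤ H := by exact_mod_cast (show (d : ℝ) ≤ H by linarith)
  have hpH (s) : house (p s : K) ≤ H := by
    have hle := Finset.single_le_sum (f := fun s => house (p s : K))
      (fun _ _ => house_nonneg _) (Finset.mem_univ s)
    linarith [d.cast_nonneg (α := ℝ)]
  refine ⟨d ^ Fintype.card κ, H ^ Fintype.card κ, pow_ne_zero _ hd, fun M t ht => ?_⟩
  choose z hz hzH using fun i =>
    exists_coe_eq_pow_mul_zpow (hp (.inl i)) (hp (.inr i)) hdH (hpH _) (hpH _) (ht i)
  have hprod : ((∏ i, z i : 𝓞 K) : K) = ∏ i, (z i : K) := map_prod (algebraMap (𝓞 K) K) _ _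
  refine ⟨∏ i, z i, ?_, ?_⟩
  · simp only [hprod, hz, Sum.elim_inl, Finset.prod_mul_distrib, Finset.prod_const,
      Finset.card_univ]
    push_cast
    ring
  · calc house ((∏ i, z i : 𝓞 K) : K) ≤ ∏ i, house (z i : K) := by
          rw [hprod]
          exact house_prod_univ_le _
      _ ≤ ∏ _i : κ, (H : ℝ) ^ M :=
        Finset.prod_le_prod (fun _ _ => house_nonneg _) fun i _ => hzH i
      _ = ((H ^ Fintype.card κ : ℕ) : ℝ) ^ M := by
          rw [Finset.prod_const, Finset.card_univ]
          push_cast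
          ring

end Denominators

section Trace

variable {K : Type u} [Field K] [NumberField K]

lemma eq_zero_of_forall_trace_mul_eq_zero {y : 𝓞 K}
    (h : ∀ x : 𝓞 K, Algebra.trace ℤ (𝓞 K) (y * x) = 0) : y = 0 := by
  by_contra hy
  obtain ⟨d, hd, x, hx⟩ := exists_natCast_mul_eq_coe fun _ : Unit => (y : K)⁻¹
  have hyx : y * x () = algebraMap ℤ (𝓞 K) d := by
    apply RingOfIntegers.coe_injective
    have hy0 : (y : K) ≠ 0 := RingOfIntegers.coe_ne_zero_iff.2 hy
    calc ((y * x () : 𝓞 K) : K) = y * x () := map_mul (algebraMap (𝓞 K) K) _ _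
      _ = d := by rw [hx]; field_simp
      _ = _ := by simp
  have htr := h (x ())
  rw [hyx, Algebra.trace_algebraMap] at htr
  simp_all [Module.finrank_pos.ne']

lemma abs_trace_le (x : 𝓞 K) :
    (|Algebra.trace ℤ (𝓞 K) x| : ℤ) ≤ finrank ℚ K * house (x : K) := by
  have htr := trace_eq_sum_embeddings ℂ (K := ℚ) (x := (x : K))
  rw [← Algebra.coe_trace_int, eq_ratCast, Rat.cast_intCast] at htr
  rw [Int.cast_abs, ← Complex.norm_intCast, htr, ← AlgHom.card ℚ K ℂ, ← nsmul_eq_mul,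
    ← Finset.card_univ]
  exact (norm_sum_le _ _).trans (Finset.sum_le_card_nsmul _ _ _ fun φ _ =>
    norm_embedding_le_house (x : K) (φ : K →+* ℂ))

variable (ι : K →+* ℂ) [IsGalois ℚ K]

lemma sum_embedding_smul (x : 𝓞 K) :
    ∑ σ : K ≃ₐ[ℚ] K, ι (σ • x : 𝓞 K) = (Algebra.trace ℤ (𝓞 K) x : ℂ) := by
  have htr := congrArg ι (trace_eq_sum_automorphisms (K := ℚ) (x : K))
  rw [map_sum, ← Algebra.coe_trace_int, eq_ratCast, map_ratCast, Rat.cast_intCast] at htr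
  exact htr.symm

lemma sum_sum_smul_mul {κ : Type*} [Fintype κ] (l : κ → ℂ) (β : κ → 𝓞 K) (x : 𝓞 K) :
    ∑ σ : K ≃ₐ[ℚ] K, (∑ i, ι (σ • β i : 𝓞 K) * l i) * ι (σ • x : 𝓞 K) =
      ∑ i, Algebra.trace ℤ (𝓞 K) (β i * x) * l i := by
  simp only [Finset.sum_mul, ← sum_embedding_smul ι]
  rw [Finset.sum_comm]
  refine Finset.sum_congr rfl fun i _ => Finset.sum_congr rfl fun σ _ => ?_
  simp only [RingOfIntegers.coe_eq_algebraMap, smul_mul', map_mul]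
  ring

end Trace

section Reduction

variable {K : Type u} [Field K] [NumberField K] {ι : K →+* ℂ} {κ : Type*} [Fintype κ]

lemma exists_map_eq_pow_mul_exp_trace {l : κ → ℂ} {a : κ → K} (hl : ∀ i, exp (l i) = ι (a i))
    (β : κ → 𝓞 K) : ∃ d H : ℕ, d ≠ 0 ∧ ∀ (b : ℕ) (x : 𝓞 K), house (x : K) ≤ b →
      ∃ z : 𝓞 K, ι z = d ^ b * exp (∑ i, Algebra.trace ℤ (𝓞 K) (β i * x) * l i) ∧
        house (z : K) ≤ H ^ b := by
  obtain ⟨d, H, hd, hdH⟩ := exists_coe_eq_pow_mul_prod_zpow a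
  obtain ⟨C, hC⟩ := exists_nat_ge (∑ i, finrank ℚ K * house (β i : K))
  have htr (b : ℕ) (x : 𝓞 K) (hx : house (x : K) ≤ b) (i : κ) :
      |Algebra.trace ℤ (𝓞 K) (β i * x)| ≤ (C * b : ℕ) := by
    have hβx : house ((β i * x : 𝓞 K) : K) ≤ house (β i : K) * house (x : K) :=
      house_mul_le (β i : K) (x : K)
    have hβ : finrank ℚ K * house (β i : K) ≤ ∑ i, finrank ℚ K * house (β i : K) :=
      Finset.single_le_sum (f := fun i => finrank ℚ K * house (β i : K))
        (fun _ _ => mul_nonneg (Nat.cast_nonneg _) (house_nonneg _)) (Finset.mem_univ i)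
    have hβ0 := house_nonneg (β i : K)
    suffices h : ((|Algebra.trace ℤ (𝓞 K) (β i * x)| : ℤ) : ℝ) ≤ C * b by exact_mod_cast h
    calc ((|Algebra.trace ℤ (𝓞 K) (β i * x)| : ℤ) : ℝ)
        ≤ finrank ℚ K * house ((β i * x : 𝓞 K) : K) := abs_trace_le _
      _ ≤ finrank ℚ K * (house (β i : K) * b) := by
          gcongr
          exact hβx.trans (by gcongr)
      _ = finrank ℚ K * house (β i : K) * b := (mul_assoc _ _ _).symm
      _ ≤ C * b := by
          gcongr
          exact hβ.trans hC
  refine ⟨d ^ C, H ^ C, pow_ne_zero _ hd, fun b x hx => ?_⟩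
  obtain ⟨z, hz, hzH⟩ := hdH (C * b) _ (htr b x hx)
  refine ⟨z, ?_, by simpa [pow_mul] using hzH⟩
  simp only [hz, map_mul, map_pow, map_natCast, map_prod, map_zpow₀, ← hl, Complex.exp_sum,
    Complex.exp_int_mul, Nat.cast_pow, pow_mul]

lemma exists_expLattice [IsGalois ℚ K] {l : κ → ℂ} {a : κ → K} (hl : ∀ i, exp (l i) = ι (a i))
    {β : κ → 𝓞 K} {b₀ : 𝓞 K} (h : ∑ i, ι (β i) * l i = ι b₀) :
    ∃ Λ : ExpLattice ι, ∀ σ, ι (Λ.ε σ) * Λ.w σ = ∑ i, ι (σ • β i : 𝓞 K) * l i := by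
  classical
  obtain ⟨d, H, hd, hdH⟩ := exists_map_eq_pow_mul_exp_trace hl β
  choose! value hvalue hvalueH using hdH
  set u : (K ≃ₐ[ℚ] K) → ℂ := fun σ => ∑ i, ι (σ • β i : 𝓞 K) * l i with hu
  have hu1 : u 1 = ι b₀ := by simpa [hu] using h
  -- Since `w` must not vanish and `w 1 = 1`, the zeros of `u` and the number `u 1` go into `ε`.
  let w (σ : K ≃ₐ[ℚ] K) : ℂ := if σ = 1 ∨ u σ = 0 then 1 else u σ
  let ε (σ : K ≃ₐ[ℚ] K) : 𝓞 K := if σ = 1 then b₀ else if u σ = 0 then 0 else 1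
  have hεw (σ) : ι (ε σ) * w σ = u σ := by
    by_cases hσ : σ = 1
    · simp [ε, w, hσ, hu1]
    · by_cases hσu : u σ = 0 <;> simp [ε, w, hσ, hσu]
  refine ⟨{ w, ε, den := d, growth := H, value, den_ne_zero := hd, house_value_le := hvalueH,
            w_ne_zero := fun σ => ?_, w_one := if_pos (Or.inl rfl),
            value_eq := fun b x hx => ?_ }, hεw⟩
  · simp only [w]
    split_ifs with hσ
    exacts [one_ne_zero, (not_or.1 hσ).2]
  · rw [hvalue b x hx, ← sum_sum_smul_mul ι]
    congr 2
    refine Finset.sum_congr rfl fun σ _ => ?_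
    change u σ * _ = _
    rw [← hεw]
    simp only [RingOfIntegers.coe_eq_algebraMap, map_mul]
    ring

theorem eq_zero_of_sum_mul_eq [IsGalois ℚ K] {l : κ → ℂ} {a : κ → K}
    (hl : ∀ i, exp (l i) = ι (a i)) (hli : LinearIndependent ℤ l) {β : κ → 𝓞 K} {b₀ : 𝓞 K}
    (h : ∑ i, ι (β i) * l i = ι b₀) : β = 0 := by
  obtain ⟨Λ, hΛ⟩ := exists_expLattice hl h
  have hu (σ : K ≃ₐ[ℚ] K) : ∑ i, ι (σ • β i : 𝓞 K) * l i = 0 := by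
    simp [← hΛ, Λ.ε_eq_zero]
  funext i
  refine eq_zero_of_forall_trace_mul_eq_zero fun x => ?_
  refine Fintype.linearIndependent_iff.1 hli (fun i => Algebra.trace ℤ (𝓞 K) (β i * x)) ?_ i
  simp only [zsmul_eq_mul, ← sum_sum_smul_mul ι, hu, zero_mul, Finset.sum_const_zero]

end Reduction

lemma exists_isGalois_numberField {κ : Type*} [Finite κ] {x : κ → ℂ}
    (hx : ∀ i, IsAlgebraic ℚ (x i)) :
    ∃ (K : Type) (_ : Field K) (_ : NumberField K) (_ : IsGalois ℚ K) (ι : K →+* ℂ),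
      ∀ i, x i ∈ Set.range ι := by
  have := Fintype.ofFinite κ
  let p : ℚ[X] := ∏ i, minpoly ℚ (x i)
  have hp : p ≠ 0 := Finset.prod_ne_zero_iff.2 fun i _ => minpoly.ne_zero (hx i).isIntegral
  let K : IntermediateField ℚ ℂ := IntermediateField.adjoin ℚ (p.rootSet ℂ)
  have hsplit : IsSplittingField ℚ K p :=
    IntermediateField.adjoin_rootSet_isSplittingField (IsAlgClosed.splits _)
  have hfin : FiniteDimensional ℚ K := IsSplittingField.finiteDimensional K p
  have hnormal : Normal ℚ K := Normal.of_isSplittingField p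
  have hnumber : NumberField K := {}
  refine ⟨K, inferInstance, hnumber, {}, algebraMap K ℂ, fun i => ⟨⟨x i, ?_⟩, rfl⟩⟩
  refine IntermediateField.subset_adjoin ℚ _ ((mem_rootSet_of_ne hp).2 ?_)
  rw [map_prod]
  exact Finset.prod_eq_zero (Finset.mem_univ i) (minpoly.aeval ℚ (x i))

theorem stmt7_general {κ : Type*} [Fintype κ] {l : κ → ℂ} (hl : ∀ i, IsAlgebraic ℚ (exp (l i)))
    (hli : LinearIndependent ℚ l) {β₀ : ℂ} {β : κ → ℂ} (hβ₀ : IsAlgebraic ℚ β₀)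
    (hβ : ∀ i, IsAlgebraic ℚ (β i)) (h : β₀ + ∑ i, β i * l i = 0) : β₀ = 0 ∧ ∀ i, β i = 0 := by
  suffices hβ0 : ∀ i, β i = 0 from ⟨by simpa [hβ0] using h, hβ0⟩
  obtain ⟨K, _, _, _, ι, hι⟩ := exists_isGalois_numberField
    (x := Sum.elim (fun i => exp (l i)) fun i : Option κ => i.elim β₀ β)
    (by rintro (i | _ | i); exacts [hl i, hβ₀, hβ i])
  choose a ha using fun i => hι (.inl i)
  choose b hb using fun i => hι (.inr i)
  obtain ⟨d, hd, p, hp⟩ := exists_natCast_mul_eq_coe b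
  have hιp (i) : ι (p i) = d * i.elim β₀ β := by
    simpa [hb] using congrArg ι (hp i)
  have hp0 : (fun i => p (some i)) = 0 := by
    refine eq_zero_of_sum_mul_eq (b₀ := -p none) (fun i => (ha i).symm)
      ((LinearIndependent.iff_fractionRing ℤ ℚ).2 hli) ?_
    simp only [RingOfIntegers.coe_eq_algebraMap, map_neg, hιp, Option.elim, mul_assoc,
      ← Finset.mul_sum]
    linear_combination (d : ℂ) * h
  exact fun i => by simpa [congrFun hp0 i, hd] using hιp (some i)

/-- (Baker) If `α₁, …, α_n` are non-zero algebraic numbers whose logarithms are linearly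
independent over `ℚ`, then `1, log α₁, …, log α_n` are linearly independent over the field
of algebraic numbers. -/
theorem stmt7 (n : ℕ) (α : Fin n → ℂ)
    (h0 : ∀ i, α i ≠ 0) (halg : ∀ i, IsAlgebraic ℚ (α i))
    (hli : ∀ c : Fin n → ℚ, ∑ i, (c i : ℂ) * Complex.log (α i) = 0 → ∀ i, c i = 0) :
    ∀ (β₀ : ℂ) (β : Fin n → ℂ), IsAlgebraic ℚ β₀ → (∀ i, IsAlgebraic ℚ (β i)) →
      β₀ + ∑ i, β i * Complex.log (α i) = 0 → β₀ = 0 ∧ ∀ i, β i = 0 := by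
  refine fun β₀ β => stmt7_general (fun i => by rw [Complex.exp_log (h0 i)]; exact halg i)
    (Fintype.linearIndependent_iff.2 fun c hc => hli c ?_)
  simpa only [Rat.smul_def] using hc
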